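/- arXiv:2211.01306 — 3 statements merged into one kernel-verified Lean document; each statement's English description precedes it below -/
import Mathlib

section
/- Let K ≥ 2, τ > 0, and β ∈ ℝ^K with all β_i > 0, and let X have the Concrete distribution C(β, τ). Then for all indices i, j, k, l, the log-ratio covariance satisfies Cov[log(X_i/X_k), log(X_j/X_l)] = (π²/(6τ²))(δ_{ij} − δ_{il} − δ_{jk} + δ_{kl}), where δ is the Kronecker delta. -/
open MeasureTheory Finset

noncomputable def fillMap (K : ℕ) (u : Fin (K - 1) → ℝ) : Fin K → ℝ :=
  fun i => if h : (i : ℕ) < K - 1 then u ⟨i, h⟩ else 1 - ∑ j, u j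

/-- The `(K-1)`-dimensional Lebesgue measure on the probability simplex `S_K`. -/
noncomputable def simplexMeasure (K : ℕ) : Measure (Fin K → ℝ) :=
  Measure.map (fillMap K)
    (volume.restrict {u : Fin (K - 1) → ℝ | (∀ j, 0 ≤ u j) ∧ ∑ j, u j ≤ 1})

/-- The density of the Concrete distribution `C(β, τ)` on the simplex. -/
noncomputable def concreteDensity (K : ℕ) (β : Fin K → ℝ) (τ : ℝ) (x : Fin K → ℝ) : ℝ :=
  (Nat.factorial (K - 1) : ℝ) * τ ^ (K - 1) * (∑ j, β j / x j ^ τ) ^ (-(K : ℝ)) *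
    ∏ i, β i / x i ^ (τ + 1)

/-- Kronecker delta. -/
def kd {K : ℕ} (a b : Fin K) : ℝ := if a = b then 1 else 0

set_option linter.unusedSimpArgs false
namespace ConcreteAux
open ProbabilityTheory

/-- Gamma integral after the substitution `t = exp (-τ s)`. -/
lemma gumbel_integral {τ a S : ℝ} (hτ : 0 < τ) (ha : 0 < a) (hS : 0 < S) :
    ∫ s : ℝ, τ * Real.exp (-(τ * a * s)) * Real.exp (-(S * Real.exp (-(τ * s))))
      = (1 / S) ^ a * Real.Gamma a := by
  have himg : Set.image (fun s : ℝ => Real.exp (-(τ * s))) Set.univ = Set.Ioi 0 := by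
    ext y
    simp only [Set.image_univ, Set.mem_range, Set.mem_Ioi]
    constructor
    · rintro ⟨s, rfl⟩; exact Real.exp_pos _
    · intro hy
      refine ⟨-(Real.log y / τ), ?_⟩
      have : -(τ * -(Real.log y / τ)) = Real.log y := by field_simp
      rw [this, Real.exp_log hy]
  rw [← Real.integral_rpow_mul_exp_neg_mul_Ioi ha hS, ← himg,
    integral_image_eq_integral_abs_deriv_smul (f' := fun s => Real.exp (-(τ * s)) * (-τ))
      MeasurableSet.univ]
  · rw [Measure.restrict_univ]
    congr 1
    ext s
    rw [abs_mul, abs_neg, abs_of_pos hτ, abs_of_pos (Real.exp_pos _), smul_eq_mul,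
      ← Real.exp_mul]
    have : Real.exp (-(τ * a * s)) = Real.exp (-(τ * s)) * Real.exp (-(τ * s) * (a - 1)) := by
      rw [← Real.exp_add]; congr 1; ring
    rw [this]; ring
  · intro x _
    have h1 : HasDerivAt (fun s : ℝ => -(τ * s)) (-τ) x := by
      simpa using (hasDerivAt_id x).const_mul (-τ)
    exact h1.exp.hasDerivWithinAt
  · intro x _ y _ h
    have := Real.exp_injective h
    have h2 : τ * x = τ * y := by linarith
    exact mul_left_cancel₀ hτ.ne' h2

/-- Gumbel-type density. -/
noncomputable def gp (τ b w : ℝ) : ℝ :=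
  τ * b * Real.exp (-(τ * w)) * Real.exp (-(b * Real.exp (-(τ * w))))

lemma gp_pos {τ b : ℝ} (hτ : 0 < τ) (hb : 0 < b) (w : ℝ) : 0 < gp τ b w := by
  unfold gp; positivity

lemma gp_cont (τ b : ℝ) : Continuous (gp τ b) := by
  unfold gp; fun_prop

lemma gp_mgf {τ b t : ℝ} (hτ : 0 < τ) (hb : 0 < b) (ht : t < τ) :
    ∫ w, gp τ b w * Real.exp (t * w) = b ^ (t / τ) * Real.Gamma (1 - t / τ) := by
  have ha : 0 < 1 - t / τ := by rw [sub_pos, div_lt_one hτ]; exact ht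
  have h := gumbel_integral hτ ha hb
  have : ∀ w, gp τ b w * Real.exp (t * w) = b * (τ * Real.exp (-(τ * (1 - t / τ) * w)) *
      Real.exp (-(b * Real.exp (-(τ * w))))) := by
    intro w
    have e : Real.exp (-(τ * (1 - t / τ) * w)) = Real.exp (-(τ * w)) * Real.exp (t * w) := by
      rw [← Real.exp_add]; congr 1; field_simp; ring
    rw [e, gp]; ring
  simp_rw [this]
  rw [integral_const_mul, h, ← mul_assoc, one_div, Real.inv_rpow hb.le, ← Real.rpow_neg hb.le]
  congr 1
  nth_rw 1 [← Real.rpow_one b]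
  rw [← Real.rpow_add hb]; congr 1; ring

lemma gp_mgf_integrable {τ b t : ℝ} (hτ : 0 < τ) (hb : 0 < b) (ht : t < τ) :
    Integrable (fun w => gp τ b w * Real.exp (t * w)) := by
  apply Integrable.of_integral_ne_zero
  rw [gp_mgf hτ hb ht]
  have ha : 0 < 1 - t / τ := by rw [sub_pos, div_lt_one hτ]; exact ht
  have := Real.Gamma_pos_of_pos ha
  positivity

noncomputable def gm (τ b : ℝ) : Measure ℝ :=
  (volume : Measure ℝ).withDensity (fun w => ENNReal.ofReal (gp τ b w))

lemma gm_integral {τ b : ℝ} (hτ : 0 < τ) (hb : 0 < b) (f : ℝ → ℝ) :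
    ∫ w, f w ∂(gm τ b) = ∫ w, gp τ b w * f w := by
  unfold gm
  rw [integral_withDensity_eq_integral_toReal_smul
    (by exact ENNReal.measurable_ofReal.comp (gp_cont τ b).measurable) (by simp)]
  simp [ENNReal.toReal_ofReal (gp_pos hτ hb _).le]

lemma gm_integrable {τ b : ℝ} (hτ : 0 < τ) (hb : 0 < b) (f : ℝ → ℝ) :
    Integrable f (gm τ b) ↔ Integrable (fun w => gp τ b w * f w) := by
  unfold gm
  rw [integrable_withDensity_iff_integrable_smul'
    (by exact ENNReal.measurable_ofReal.comp (gp_cont τ b).measurable) (by simp)]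
  simp [ENNReal.toReal_ofReal (gp_pos hτ hb _).le]

lemma gp_int_one {τ b : ℝ} (hτ : 0 < τ) (hb : 0 < b) : ∫ w, gp τ b w = 1 := by
  have := gp_mgf hτ hb hτ
  simpa using gp_mgf (t := 0) hτ hb hτ

lemma gp_integrable {τ b : ℝ} (hτ : 0 < τ) (hb : 0 < b) : Integrable (gp τ b) :=
  integrable_of_integral_eq_one (gp_int_one hτ hb)

lemma gm_prob {τ b : ℝ} (hτ : 0 < τ) (hb : 0 < b) : IsProbabilityMeasure (gm τ b) := by
  constructor
  rw [gm, withDensity_apply _ MeasurableSet.univ, Measure.restrict_univ,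
    ← ofReal_integral_eq_lintegral_ofReal (gp_integrable hτ hb)
      (ae_of_all _ fun w => (gp_pos hτ hb w).le), gp_int_one hτ hb, ENNReal.ofReal_one]

lemma gm_expSet {τ b : ℝ} (hτ : 0 < τ) (hb : 0 < b) {t : ℝ} (ht : t < τ) :
    t ∈ interior (integrableExpSet id (gm τ b)) := by
  have : Set.Iio τ ⊆ integrableExpSet id (gm τ b) := by
    intro s hs
    exact (gm_integrable hτ hb _).2 (gp_mgf_integrable hτ hb hs)
  exact interior_maximal this isOpen_Iio ht

lemma gm_memLp {τ b : ℝ} (hτ : 0 < τ) (hb : 0 < b) : MemLp id 2 (gm τ b) :=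
  memLp_of_mem_interior_integrableExpSet (gm_expSet hτ hb hτ) 2

lemma gm_refl {τ b t : ℝ} (hτ : 0 < τ) (hb : 0 < b) (h1 : -τ < t) (h2 : t < τ) :
    (∫ w, Real.exp (t * w) ∂(gm τ b)) * (∫ w, Real.exp (-t * w) ∂(gm τ b)) *
      Real.sin (Real.pi / τ * t) = Real.pi / τ * t := by
  rw [gm_integral hτ hb, gm_integral hτ hb, gp_mgf hτ hb h2, gp_mgf hτ hb (by linarith)]
  rcases eq_or_ne t 0 with rfl | h0
  · simp
  have hb' : b ^ (t / τ) * b ^ (-t / τ) = 1 := by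
    rw [← Real.rpow_add hb]; simp [neg_div]
  have hs : t / τ ≠ 0 := div_ne_zero h0 hτ.ne'
  have hG : Real.Gamma (1 - -t / τ) = t / τ * Real.Gamma (t / τ) := by
    rw [← Real.Gamma_add_one hs]; congr 1; ring
  have hR := Real.Gamma_mul_Gamma_one_sub (t / τ)
  have hsin : Real.sin (Real.pi * (t / τ)) ≠ 0 := by
    intro h
    have hpi := Real.pi_pos
    rcases lt_or_gt_of_ne hs with h' | h'
    · have hlt : -1 < t / τ := by rw [lt_div_iff₀ hτ]; linarith
      have := Real.sin_neg_of_neg_of_neg_pi_lt (x := Real.pi * (t / τ)) (by nlinarith) (by nlinarith)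
      linarith
    · have hlt : t / τ < 1 := by rw [div_lt_iff₀ hτ]; linarith
      have := Real.sin_pos_of_pos_of_lt_pi (x := Real.pi * (t / τ)) (by positivity) (by nlinarith)
      linarith
  have e : Real.pi / τ * t = Real.pi * (t / τ) := by ring
  rw [e, hG]
  rw [eq_div_iff hsin] at hR
  calc _ = (b ^ (t / τ) * b ^ (-t / τ)) * (t / τ) * (Real.Gamma (t / τ) * Real.Gamma (1 - t / τ) *
        Real.sin (Real.pi * (t / τ))) := by ring
    _ = _ := by rw [hb', hR]; ring

lemma gm_var {τ b : ℝ} (hτ : 0 < τ) (hb : 0 < b) :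
    Var[id; gm τ b] = Real.pi ^ 2 / (6 * τ ^ 2) := by
  have := gm_prob hτ hb
  rw [variance_eq_sub (gm_memLp hτ hb)]
  set a := Real.pi / τ with ha
  have ha0 : 0 < a := by have := Real.pi_pos; positivity
  let M : ℕ → ℝ → ℝ := fun n t => ∫ w, w ^ n * Real.exp (t * w) ∂(gm τ b)
  have hM : ∀ n t, t < τ → HasDerivAt (M n) (M (n + 1) t) t := fun n t ht =>
    hasDerivAt_integral_pow_mul_exp_real (gm_expSet hτ hb ht) n
  let N : ℕ → ℝ → ℝ := fun n t => M n (-t)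
  have hN : ∀ n t, -τ < t → HasDerivAt (N n) (-N (n + 1) t) t := fun n t ht => by
    have := (hM n (-t) (by linarith)).scomp t (hasDerivAt_neg t)
    simpa [N, Function.comp_def] using this
  have hs : ∀ t, HasDerivAt (fun t => Real.sin (a * t)) (Real.cos (a * t) * a) t := fun t => by
    have := ((hasDerivAt_id t).const_mul a).sin
    simpa using this
  have hc : ∀ t, HasDerivAt (fun t => Real.cos (a * t)) (-Real.sin (a * t) * a) t := fun t => by
    have := ((hasDerivAt_id t).const_mul a).cos
    simpa using this
  have key : ∀ (F F' : ℝ → ℝ), (∀ t ∈ Set.Ioo (-τ) τ, F t = 0) →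
      (∀ t ∈ Set.Ioo (-τ) τ, HasDerivAt F (F' t) t) → ∀ t ∈ Set.Ioo (-τ) τ, F' t = 0 := by
    intro F F' h0 hd t ht
    have : F =ᶠ[nhds t] fun _ => 0 := by
      filter_upwards [Ioo_mem_nhds ht.1 ht.2] with s hs using h0 s hs
    exact (hd t ht).unique ((hasDerivAt_const t (0:ℝ)).congr_of_eventuallyEq this)
  have e0 : ∀ t ∈ Set.Ioo (-τ) τ, M 0 t * N 0 t * Real.sin (a * t) - a * t = 0 := by
    intro t ht
    have := gm_refl hτ hb ht.1 ht.2
    simp only [M, N, pow_zero, one_mul]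
    linarith
  have e1 := key _ (fun t => (M 1 t * N 0 t - M 0 t * N 1 t) * Real.sin (a * t)
      + M 0 t * N 0 t * (Real.cos (a * t) * a) - a) e0 (by
    intro t ht
    have := (((hM 0 t ht.2).mul (hN 0 t ht.1)).mul (hs t)).sub ((hasDerivAt_id t).const_mul a)
    refine this.congr_deriv ?_
    simp only [Pi.mul_apply, Pi.sub_apply, Pi.add_apply, Nat.reduceAdd, zero_add, mul_one]; ring)
  have e2 := key _ (fun t => (M 2 t * N 0 t - 2 * (M 1 t * N 1 t) + M 0 t * N 2 t) * Real.sin (a * t)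
      + 2 * ((M 1 t * N 0 t - M 0 t * N 1 t) * (Real.cos (a * t) * a))
      - a ^ 2 * (M 0 t * N 0 t * Real.sin (a * t))) e1 (by
    intro t ht
    have := (((((hM 1 t ht.2).mul (hN 0 t ht.1)).sub ((hM 0 t ht.2).mul (hN 1 t ht.1))).mul
      (hs t)).add (((hM 0 t ht.2).mul (hN 0 t ht.1)).mul ((hc t).mul_const a))).sub
        (hasDerivAt_const t a)
    refine this.congr_deriv ?_
    simp only [Pi.mul_apply, Pi.sub_apply, Pi.add_apply, Nat.reduceAdd, zero_add, mul_one]; ring)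
  have e3 := key _ (fun t => ((M 3 t * N 0 t - M 2 t * N 1 t)
        - 2 * (M 2 t * N 1 t - M 1 t * N 2 t) + (M 1 t * N 2 t - M 0 t * N 3 t)) * Real.sin (a * t)
      + (M 2 t * N 0 t - 2 * (M 1 t * N 1 t) + M 0 t * N 2 t) * (Real.cos (a * t) * a)
      + 2 * ((M 2 t * N 0 t - 2 * (M 1 t * N 1 t) + M 0 t * N 2 t) * (Real.cos (a * t) * a)
        + (M 1 t * N 0 t - M 0 t * N 1 t) * (-Real.sin (a * t) * a * a))
      - a ^ 2 * ((M 1 t * N 0 t - M 0 t * N 1 t) * Real.sin (a * t)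
        + M 0 t * N 0 t * (Real.cos (a * t) * a))) e2 (by
    intro t ht
    have h2 := ((((hM 2 t ht.2).mul (hN 0 t ht.1)).sub
      (((hM 1 t ht.2).mul (hN 1 t ht.1)).const_mul 2)).add
        ((hM 0 t ht.2).mul (hN 2 t ht.1))).mul (hs t)
    have h1 := ((((hM 1 t ht.2).mul (hN 0 t ht.1)).sub ((hM 0 t ht.2).mul (hN 1 t ht.1))).mul
      ((hc t).mul_const a)).const_mul 2
    have h0 := (((hM 0 t ht.2).mul (hN 0 t ht.1)).mul (hs t)).const_mul (a ^ 2)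
    refine ((h2.add h1).sub h0).congr_deriv ?_
    simp only [Pi.mul_apply, Pi.sub_apply, Pi.add_apply, Nat.reduceAdd, zero_add, mul_one]; ring)
  have h0 := e3 0 ⟨by linarith, hτ⟩
  have hM0 : M 0 0 = 1 := by simp [M]
  simp [N, hM0] at h0
  have hm2 : (gm τ b)[id ^ 2] = M 2 0 := by simp [M]
  have hm1 : (gm τ b)[id] = M 1 0 := by simp [M]
  rw [hm2, hm1]
  have : (M 2 0 - M 1 0 ^ 2) * (6 * a) = a * a ^ 2 := by linarith
  have h6 : M 2 0 - M 1 0 ^ 2 = a ^ 2 / 6 := by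
    have := mul_left_cancel₀ ha0.ne' (show a * ((M 2 0 - M 1 0 ^ 2) * 6) = a * a ^ 2 by linarith)
    linarith
  rw [h6, ha]; field_simp

section pi
variable {K : ℕ}

noncomputable def gpi (τ : ℝ) (β : Fin K → ℝ) (w : Fin K → ℝ) : ℝ := ∏ m, gp τ (β m) (w m)

lemma gpi_pos {τ : ℝ} (hτ : 0 < τ) {β : Fin K → ℝ} (hβ : ∀ i, 0 < β i) (w : Fin K → ℝ) :
    0 < gpi τ β w := Finset.prod_pos fun m _ => gp_pos hτ (hβ m) _

lemma gpi_cont (τ : ℝ) (β : Fin K → ℝ) : Continuous (gpi τ β) := by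
  unfold gpi
  exact continuous_finsetProd _ fun m _ => (gp_cont τ (β m)).comp (continuous_apply m)

lemma pi_gm {τ : ℝ} (hτ : 0 < τ) {β : Fin K → ℝ} (hβ : ∀ i, 0 < β i) :
    Measure.pi (fun m => gm τ (β m)) =
      (volume : Measure (Fin K → ℝ)).withDensity (fun w => ENNReal.ofReal (gpi τ β w)) := by
  have := fun m => gm_prob hτ (hβ m)
  refine Measure.pi_eq fun s hs => ?_
  rw [withDensity_apply _ (MeasurableSet.univ_pi hs), volume_pi, Measure.restrict_pi_pi,
    ← ofReal_integral_eq_lintegral_ofReal]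
  · unfold gpi
    rw [integral_fintype_prod_eq_prod, ENNReal.ofReal_prod_of_nonneg]
    · refine Finset.prod_congr rfl fun m _ => ?_
      rw [gm, withDensity_apply _ (hs m), ofReal_integral_eq_lintegral_ofReal]
      · exact (gp_integrable hτ (hβ m)).restrict
      · exact ae_of_all _ fun w => (gp_pos hτ (hβ m) w).le
    · intro m _
      exact integral_nonneg fun w => (gp_pos hτ (hβ m) w).le
  · unfold gpi
    exact Integrable.fintype_prod fun m => (gp_integrable hτ (hβ m)).restrict
  · exact ae_of_all _ fun w => (gpi_pos hτ hβ w).le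

lemma pi_integral {τ : ℝ} (hτ : 0 < τ) {β : Fin K → ℝ} (hβ : ∀ i, 0 < β i) (f : (Fin K → ℝ) → ℝ) :
    ∫ w, f w ∂(Measure.pi (fun m => gm τ (β m))) = ∫ w, gpi τ β w * f w := by
  rw [pi_gm hτ hβ, integral_withDensity_eq_integral_toReal_smul
    (by exact ENNReal.measurable_ofReal.comp (gpi_cont τ β).measurable) (by simp)]
  simp [ENNReal.toReal_ofReal (gpi_pos hτ hβ _).le]

lemma pi_integrable {τ : ℝ} (hτ : 0 < τ) {β : Fin K → ℝ} (hβ : ∀ i, 0 < β i)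
    (f : (Fin K → ℝ) → ℝ) :
    Integrable f (Measure.pi (fun m => gm τ (β m))) ↔ Integrable (fun w => gpi τ β w * f w) := by
  rw [pi_gm hτ hβ, integrable_withDensity_iff_integrable_smul'
    (by exact ENNReal.measurable_ofReal.comp (gpi_cont τ β).measurable) (by simp)]
  simp [ENNReal.toReal_ofReal (gpi_pos hτ hβ _).le]

lemma pi_memLp {τ : ℝ} (hτ : 0 < τ) {β : Fin K → ℝ} (hβ : ∀ i, 0 < β i) (i : Fin K) :
    MemLp (fun w : Fin K → ℝ => w i) 2 (Measure.pi (fun m => gm τ (β m))) := by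
  have := fun m => gm_prob hτ (hβ m)
  exact (gm_memLp hτ (hβ i)).comp_measurePreserving (measurePreserving_eval _ i)

lemma pi_cov {τ : ℝ} (hτ : 0 < τ) {β : Fin K → ℝ} (hβ : ∀ i, 0 < β i) (i j : Fin K) :
    cov[fun w : Fin K → ℝ => w i, fun w => w j; Measure.pi (fun m => gm τ (β m))] =
      Real.pi ^ 2 / (6 * τ ^ 2) * kd i j := by
  have := fun m => gm_prob hτ (hβ m)
  unfold kd
  split_ifs with h
  · subst h
    rw [covariance_self (measurable_pi_apply i).aemeasurable, mul_one, ← gm_var hτ (hβ i),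
      ← (measurePreserving_eval (fun m => gm τ (β m)) i).map_eq,
      variance_map aemeasurable_id (measurable_pi_apply i).aemeasurable]
    rfl
  · rw [mul_zero]
    have hI := iIndepFun_pi (μ := fun m => gm τ (β m)) (X := fun _ => id)
      (fun _ => aemeasurable_id)
    exact (hI.indepFun h).covariance_eq_zero (pi_memLp hτ hβ i) (pi_memLp hτ hβ j)

lemma pi_main {τ : ℝ} (hτ : 0 < τ) {β : Fin K → ℝ} (hβ : ∀ i, 0 < β i) (i j k l : Fin K) :
    (∫ w, gpi τ β w * ((w i - w k) * (w j - w l))) - (∫ w, gpi τ β w * (w i - w k)) *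
      (∫ w, gpi τ β w * (w j - w l)) =
      Real.pi ^ 2 / (6 * τ ^ 2) * (kd i j - kd i l - kd j k + kd k l) := by
  have := fun m => gm_prob hτ (hβ m)
  have L := pi_memLp hτ hβ
  rw [← pi_integral hτ hβ, ← pi_integral hτ hβ, ← pi_integral hτ hβ]
  have h := covariance_eq_sub ((L i).sub (L k)) ((L j).sub (L l))
  refine Eq.trans h.symm ?_
  rw [covariance_sub_left (L i) (L k) ((L j).sub (L l)), covariance_sub_right (L i) (L j) (L l),
    covariance_sub_right (L k) (L j) (L l)]
  simp_rw [pi_cov hτ hβ]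
  have : kd k j = kd j k := by simp [kd, eq_comm]
  rw [this]; ring

lemma pi_int1 {τ : ℝ} (hτ : 0 < τ) {β : Fin K → ℝ} (hβ : ∀ i, 0 < β i) (i k : Fin K) :
    Integrable (fun w : Fin K → ℝ => gpi τ β w * (w i - w k)) := by
  have := fun m => gm_prob hτ (hβ m)
  have L := pi_memLp hτ hβ
  exact (pi_integrable hτ hβ _).1 (((L i).sub (L k)).integrable (by norm_num))

lemma pi_int2 {τ : ℝ} (hτ : 0 < τ) {β : Fin K → ℝ} (hβ : ∀ i, 0 < β i) (i j k l : Fin K) :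
    Integrable (fun w : Fin K → ℝ => gpi τ β w * ((w i - w k) * (w j - w l))) := by
  have L := pi_memLp hτ hβ
  exact (pi_integrable hτ hβ _).1 (((L i).sub (L k)).integrable_mul ((L j).sub (L l)))
end pi

section simplex
variable {n : ℕ}

/-- Append a zero coordinate. -/
noncomputable def ext0 (v : Fin n → ℝ) : Fin (n + 1) → ℝ := Fin.snoc (α := fun _ => ℝ) v 0

@[simp] lemma ext0_castSucc (v : Fin n → ℝ) (i : Fin n) : ext0 v i.castSucc = v i := by
  simp [ext0]

@[simp] lemma ext0_last (v : Fin n → ℝ) : ext0 v (Fin.last n) = 0 := by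
  simp [ext0]

noncomputable def zz (v : Fin n → ℝ) : ℝ := 1 + ∑ j, Real.exp (v j)

lemma zz_pos (v : Fin n → ℝ) : 0 < zz v := by
  unfold zz; positivity

/-- Softmax in full coordinates. -/
noncomputable def sm (v : Fin n → ℝ) (m : Fin (n + 1)) : ℝ := Real.exp (ext0 v m - Real.log (zz v))

/-- Softmax without the last coordinate. -/
noncomputable def st (v : Fin n → ℝ) (i : Fin n) : ℝ := Real.exp (v i - Real.log (zz v))

lemma st_eq (v : Fin n → ℝ) (i : Fin n) : st v i = Real.exp (v i) / zz v := by
  rw [st, Real.exp_sub, Real.exp_log (zz_pos v)]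

lemma one_sub_st (v : Fin n → ℝ) : 1 - ∑ i, st v i = sm v (Fin.last n) := by
  simp_rw [st_eq, sm, ext0_last, Real.exp_sub, Real.exp_log (zz_pos v), ← Finset.sum_div]
  have := zz_pos v
  rw [eq_div_iff this.ne', sub_mul, div_mul_cancel₀ _ this.ne', Real.exp_zero, zz]
  ring

lemma fill_st (v : Fin n → ℝ) : fillMap (n + 1) (st v) = sm v := by
  ext m
  refine Fin.lastCases ?_ (fun i => ?_) m
  · rw [← one_sub_st]
    simp [fillMap]
  · simp [fillMap, sm, st]

lemma prod_sm (v : Fin n → ℝ) : ∏ m, sm v m = (∏ i, st v i) * (1 - ∑ i, st v i) := by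
  rw [Fin.prod_univ_castSucc, one_sub_st]
  simp [sm, st]

noncomputable def sJ (v : Fin n → ℝ) : Matrix (Fin n) (Fin n) ℝ :=
  Matrix.diagonal (st v) *
    (1 - Matrix.replicateCol Unit (fun _ : Fin n => (1 : ℝ)) * Matrix.replicateRow Unit (st v))

lemma sJ_det (v : Fin n → ℝ) : (sJ v).det = ∏ m, sm v m := by
  rw [sJ, Matrix.det_mul, Matrix.det_diagonal, Matrix.det_one_sub_mul_comm, prod_sm]
  congr 1
  simp [Matrix.mul_apply]

lemma st_fderiv (v : Fin n → ℝ) :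
    HasFDerivAt st (LinearMap.toContinuousLinearMap (Matrix.toLin' (sJ v))) v := by
  rw [hasFDerivAt_pi']
  intro i
  have hp : ∀ j : Fin n, HasFDerivAt (fun w : Fin n → ℝ => w j)
      (ContinuousLinearMap.proj (R := ℝ) (φ := fun _ : Fin n => ℝ) j) v :=
    fun j => hasFDerivAt_apply j v
  have hZ : HasFDerivAt (fun w : Fin n → ℝ => zz w)
      (∑ j, Real.exp (v j) • ContinuousLinearMap.proj (R := ℝ) (φ := fun _ : Fin n => ℝ) j) v := by
    unfold zz
    have hsum : HasFDerivAt (fun w : Fin n → ℝ => ∑ j, Real.exp (w j))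
        (∑ j, Real.exp (v j) • ContinuousLinearMap.proj (R := ℝ) (φ := fun _ : Fin n => ℝ) j) v :=
      HasFDerivAt.fun_sum fun j _ => (hp j).exp
    exact hsum.const_add 1
  have h := ((hp i).sub (hZ.log (zz_pos v).ne')).exp
  refine h.congr_fderiv ?_
  ext d
  simp [sJ, Matrix.mulVec, dotProduct, Matrix.mul_apply, Matrix.one_apply, Matrix.diagonal_apply,
    sub_mul, mul_sub, Finset.sum_sub_distrib, Finset.mul_sum, st_eq]
  simp_rw [Real.exp_sub, Real.exp_log (zz_pos v)]
  congr 1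
  refine Finset.sum_congr rfl fun j _ => ?_
  ring

lemma st_inj : Function.Injective (st (n := n)) := by
  intro v w h
  have hl : sm v (Fin.last n) = sm w (Fin.last n) := by rw [← one_sub_st, ← one_sub_st, h]
  have hl' : Real.log (zz v) = Real.log (zz w) := by
    have := Real.exp_injective hl
    simpa using this
  ext i
  have := Real.exp_injective (congrFun h i)
  rw [hl'] at this
  linarith

lemma st_range : Set.range (st (n := n)) = {u | (∀ j, 0 < u j) ∧ ∑ j, u j < 1} := by
  ext u
  constructor
  · rintro ⟨v, rfl⟩
    refine ⟨fun j => Real.exp_pos _, ?_⟩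
    have h : 0 < sm v (Fin.last n) := Real.exp_pos _
    rw [← one_sub_st] at h
    linarith
  · rintro ⟨h0, h1⟩
    have hr : 0 < 1 - ∑ j, u j := by linarith
    refine ⟨fun j => Real.log (u j / (1 - ∑ j, u j)), ?_⟩
    have hz : zz (fun j => Real.log (u j / (1 - ∑ j, u j))) = 1 / (1 - ∑ j, u j) := by
      unfold zz
      have : ∀ j, Real.exp (Real.log (u j / (1 - ∑ j, u j))) = u j / (1 - ∑ j, u j) :=
        fun j => Real.exp_log (div_pos (h0 j) hr)
      simp_rw [this, ← Finset.sum_div]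
      field_simp
      ring
    ext i
    rw [st_eq, hz, Real.exp_log (div_pos (h0 i) hr)]
    field_simp

lemma fill_meas (n : ℕ) : Measurable (fillMap (n + 1)) := by
  refine measurable_pi_lambda _ fun m => ?_
  unfold fillMap
  split_ifs
  · exact measurable_pi_apply _
  · fun_prop

lemma simplex_integral {h : (Fin (n + 1) → ℝ) → ℝ} (hm : Measurable h)
    (h0 : ∀ x, (∃ m, x m = 0) → h x = 0) :
    ∫ x, h x ∂(simplexMeasure (n + 1)) = ∫ v : Fin n → ℝ, (∏ m, sm v m) * h (sm v) := by
  unfold simplexMeasure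
  rw [integral_map (fill_meas n).aemeasurable hm.aestronglyMeasurable]
  change ∫ u in {u : Fin n → ℝ | (∀ j, 0 ≤ u j) ∧ ∑ j, u j ≤ 1}, h (fillMap (n + 1) u) = _
  have hms : MeasurableSet {u : Fin n → ℝ | (∀ j, 0 ≤ u j) ∧ ∑ j, u j ≤ 1} := by
    have h1 : MeasurableSet (⋂ j, {u : Fin n → ℝ | 0 ≤ u j}) :=
      MeasurableSet.iInter fun j => measurableSet_le measurable_const (measurable_pi_apply j)
    have h2 : MeasurableSet {u : Fin n → ℝ | ∑ j, u j ≤ 1} :=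
      measurableSet_le (by fun_prop) measurable_const
    convert h1.inter h2 using 1
    ext u
    simp
  rw [setIntegral_eq_of_subset_of_forall_sdiff_eq_zero (s := Set.range (st (n := n))) hms,
    ← Set.image_univ, integral_image_eq_integral_abs_det_fderiv_smul volume MeasurableSet.univ
      (fun v _ => (st_fderiv v).hasFDerivWithinAt) st_inj.injOn, Measure.restrict_univ]
  · congr 1
    ext v
    rw [fill_st, smul_eq_mul]
    congr 1
    rw [ContinuousLinearMap.det, LinearMap.coe_toContinuousLinearMap, LinearMap.det_toLin', sJ_det]
    exact abs_of_pos (Finset.prod_pos fun m _ => Real.exp_pos _)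
  · rw [st_range]
    rintro u ⟨h1, h2⟩
    exact ⟨fun j => (h1 j).le, h2.le⟩
  · rw [st_range]
    rintro u ⟨⟨h1, h2⟩, h3⟩
    apply h0
    by_cases hs : ∑ j, u j = 1
    · refine ⟨Fin.last n, ?_⟩
      simp [fillMap]
      exact sub_eq_zero.2 hs.symm
    · have : ∃ j, u j = 0 := by
        by_contra! hne
        exact h3 ⟨fun j => lt_of_le_of_ne (h1 j) (hne j).symm, lt_of_le_of_ne h2 hs⟩
      obtain ⟨j, hj⟩ := this
      refine ⟨j.castSucc, ?_⟩
      simpa [fillMap] using hj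

lemma density_meas (K : ℕ) (β : Fin K → ℝ) (τ : ℝ) : Measurable (concreteDensity K β τ) := by
  unfold concreteDensity
  fun_prop

lemma density_zero {β : Fin (n + 1) → ℝ} {τ : ℝ} (hτ : 0 < τ) (x : Fin (n + 1) → ℝ)
    (hx : ∃ m, x m = 0) : concreteDensity (n + 1) β τ x = 0 := by
  obtain ⟨m, hm⟩ := hx
  unfold concreteDensity
  rw [Finset.prod_eq_zero (Finset.mem_univ m), mul_zero]
  rw [hm, Real.zero_rpow (by linarith), div_zero]

lemma density_sm {β : Fin (n + 1) → ℝ} {τ : ℝ} (hτ : 0 < τ) (hβ : ∀ i, 0 < β i)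
    (v : Fin n → ℝ) :
    (∏ m, sm v m) * concreteDensity (n + 1) β τ (sm v) =
      ∫ s : ℝ, gpi τ β (fun m => ext0 v m + s) := by
  set e := ext0 v with he
  set c := Real.log (zz v) with hc
  set S := ∑ m, β m * Real.exp (-(τ * e m)) with hSdef
  have hS : 0 < S := Finset.sum_pos (fun m _ => mul_pos (hβ m) (Real.exp_pos _)) ⟨0, Finset.mem_univ _⟩
  set P := ∏ m, β m * Real.exp (-(τ * e m)) with hP
  have hK : (0 : ℝ) < ((n + 1 : ℕ) : ℝ) := by positivity
  have hR : ∀ s : ℝ, gpi τ β (fun m => e m + s) = τ ^ n * P *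
      (τ * Real.exp (-(τ * ((n + 1 : ℕ) : ℝ) * s)) * Real.exp (-(S * Real.exp (-(τ * s))))) := by
    intro s
    have h1 : ∀ m, gp τ (β m) (e m + s) = τ * (β m * Real.exp (-(τ * e m))) * Real.exp (-(τ * s)) *
        Real.exp (-(β m * Real.exp (-(τ * e m)) * Real.exp (-(τ * s)))) := by
      intro m
      have : Real.exp (-(τ * (e m + s))) = Real.exp (-(τ * e m)) * Real.exp (-(τ * s)) := by
        rw [← Real.exp_add]; congr 1; ring
      rw [gp, this]; ring_nf
    unfold gpi
    simp_rw [h1]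
    rw [Finset.prod_mul_distrib, Finset.prod_mul_distrib, Finset.prod_mul_distrib, ← hP]
    have h2 : ∏ m, Real.exp (-(β m * Real.exp (-(τ * e m)) * Real.exp (-(τ * s)))) =
        Real.exp (-(S * Real.exp (-(τ * s)))) := by
      rw [← Real.exp_sum, Finset.sum_neg_distrib, ← Finset.sum_mul]
    rw [h2]
    simp only [Finset.prod_const, Finset.card_univ, Fintype.card_fin]
    rw [← Real.exp_nat_mul]
    have : Real.exp (-(τ * ((n + 1 : ℕ) : ℝ) * s)) = Real.exp (((n + 1 : ℕ) : ℝ) * -(τ * s)) := by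
      congr 1; ring
    rw [this, pow_succ]; ring
  simp_rw [hR]
  rw [integral_const_mul, gumbel_integral hτ hK hS]
  have hΓ : Real.Gamma ((n + 1 : ℕ) : ℝ) = (Nat.factorial n : ℝ) := by
    push_cast; exact Real.Gamma_nat_eq_factorial n
  rw [hΓ]
  have hx : ∀ m, sm v m = Real.exp (e m - c) := fun m => rfl
  have hsum : ∑ j, β j / sm v j ^ τ = S * Real.exp (τ * c) := by
    rw [hSdef, Finset.sum_mul]
    refine Finset.sum_congr rfl fun m _ => ?_
    rw [hx, ← Real.exp_mul, div_eq_mul_inv, ← Real.exp_neg, mul_assoc, ← Real.exp_add]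
    congr 2; ring
  have hprod : (∏ m, sm v m) * ∏ m, β m / sm v m ^ (τ + 1) =
      P * Real.exp (τ * c) ^ (n + 1) := by
    rw [← Finset.prod_mul_distrib]
    have : ∀ m, sm v m * (β m / sm v m ^ (τ + 1)) =
        β m * Real.exp (-(τ * e m)) * Real.exp (τ * c) := by
      intro m
      rw [hx, ← Real.exp_mul, div_eq_mul_inv, ← Real.exp_neg, mul_left_comm, ← Real.exp_add,
        mul_assoc, ← Real.exp_add]
      congr 2; ring
    simp_rw [this]
    rw [Finset.prod_mul_distrib]
    simp
    exact hP.symm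
  unfold concreteDensity
  rw [hsum, Real.rpow_neg (by positivity), Real.rpow_natCast, Real.rpow_natCast]
  have hE := (Real.exp_pos (τ * c)).ne'
  simp only [Nat.add_sub_cancel]
  calc _ = (Nat.factorial n : ℝ) * τ ^ n * ((S * Real.exp (τ * c)) ^ (n + 1))⁻¹ *
        ((∏ m, sm v m) * ∏ m, β m / sm v m ^ (τ + 1)) := by ring
    _ = _ := by
      rw [hprod, mul_pow, one_div, inv_pow]
      field_simp

lemma shear_mp (n : ℕ) : MeasurePreserving
    (fun p : ℝ × (Fin n → ℝ) => (fun m => ext0 p.2 m + p.1 : Fin (n + 1) → ℝ)) := by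
  have h1 := (volume_preserving_piFinSuccAbove (fun _ : Fin (n + 1) => ℝ) (Fin.last n)).symm
  have h2 : MeasurePreserving (fun p : ℝ × (Fin n → ℝ) => (id p.1, p.2 + (fun _ => p.1)))
      (volume.prod volume) (volume.prod volume) := by
    refine MeasurePreserving.skew_product (g := fun (s : ℝ) (v : Fin n → ℝ) => v + fun _ => s)
      (MeasurePreserving.id volume) ?_ ?_
    · refine measurable_pi_lambda _ fun i => ?_
      simp only [Function.uncurry_def, Pi.add_apply]
      fun_prop
    · exact ae_of_all _ fun s => map_add_right_eq_self volume _
  rw [← Measure.volume_eq_prod] at h2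
  have h3 := h1.comp h2
  convert h3 using 1
  ext p m
  refine Fin.lastCases ?_ (fun i => ?_) m
  · simp [MeasurableEquiv.piFinSuccAbove]
  · simp [MeasurableEquiv.piFinSuccAbove]

lemma transfer {β : Fin (n + 1) → ℝ} {τ : ℝ} (hτ : 0 < τ) (hβ : ∀ i, 0 < β i)
    (φ ψ : (Fin (n + 1) → ℝ) → ℝ) (hφ : Measurable φ)
    (hψ : ∀ w s, ψ (fun m => w m + s) = ψ w)
    (hφψ : ∀ v : Fin n → ℝ, φ (sm v) = ψ (ext0 v))
    (hint : Integrable (fun w => gpi τ β w * ψ w)) :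
    ∫ x, φ x * concreteDensity (n + 1) β τ x ∂(simplexMeasure (n + 1)) =
      ∫ w, gpi τ β w * ψ w := by
  rw [simplex_integral (h := fun x => φ x * concreteDensity (n + 1) β τ x)
    (hφ.mul (density_meas _ _ _))
    (fun x hx => by rw [density_zero hτ x hx, mul_zero])]
  have hmp := shear_mp n
  have hi : Integrable (fun p : ℝ × (Fin n → ℝ) =>
      gpi τ β (fun m => ext0 p.2 m + p.1) * ψ (fun m => ext0 p.2 m + p.1)) := (hmp.integrable_comp hint.aestronglyMeasurable).2 hint
  have e1 : ∫ w, gpi τ β w * ψ w = ∫ p : ℝ × (Fin n → ℝ),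
      gpi τ β (fun m => ext0 p.2 m + p.1) * ψ (fun m => ext0 p.2 m + p.1) := by
    have hh := hint.aestronglyMeasurable
    rw [← hmp.map_eq] at hh
    rw [← hmp.map_eq, integral_map hmp.measurable.aemeasurable hh]
  rw [e1, Measure.volume_eq_prod, integral_prod_symm _ hi]
  congr 1
  ext v
  simp_rw [hψ]
  rw [integral_mul_const, ← density_sm hτ hβ, hφψ]
  ring

end simplex
end ConcreteAux

/-- Log-ratio covariances of the Concrete distribution:
`Cov[log(X_i/X_k), log(X_j/X_l)] = (π²/(6τ²))(δ_ij − δ_il − δ_jk + δ_kl)`. -/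
theorem concrete_log_ratio_covariance
    (K : ℕ) (hK : 2 ≤ K) (τ : ℝ) (hτ : 0 < τ)
    (β : Fin K → ℝ) (hβ : ∀ i, 0 < β i) (i j k l : Fin K) :
    (∫ x, Real.log (x i / x k) * Real.log (x j / x l) * concreteDensity K β τ x
        ∂(simplexMeasure K))
      - (∫ x, Real.log (x i / x k) * concreteDensity K β τ x ∂(simplexMeasure K)) *
        (∫ x, Real.log (x j / x l) * concreteDensity K β τ x ∂(simplexMeasure K))
      = (Real.pi ^ 2 / (6 * τ ^ 2)) * (kd i j - kd i l - kd j k + kd k l) := by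
  obtain ⟨n, rfl⟩ : ∃ n, K = n + 1 := ⟨K - 1, by omega⟩
  have hlog : ∀ (a b : Fin (n + 1)) (v : Fin n → ℝ),
      Real.log (ConcreteAux.sm v a / ConcreteAux.sm v b)
        = ConcreteAux.ext0 v a - ConcreteAux.ext0 v b := by
    intro a b v
    rw [ConcreteAux.sm, ConcreteAux.sm, ← Real.exp_sub, Real.log_exp]
    ring
  rw [ConcreteAux.transfer hτ hβ (fun x => Real.log (x i / x k) * Real.log (x j / x l))
      (fun w => (w i - w k) * (w j - w l)) (by fun_prop) (fun w s => by ring)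
      (fun v => by simp only [hlog]) (ConcreteAux.pi_int2 hτ hβ i j k l),
    ConcreteAux.transfer hτ hβ (fun x => Real.log (x i / x k))
      (fun w => w i - w k) (by fun_prop) (fun w s => by ring)
      (fun v => by simp only [hlog]) (ConcreteAux.pi_int1 hτ hβ i k),
    ConcreteAux.transfer hτ hβ (fun x => Real.log (x j / x l))
      (fun w => w j - w l) (by fun_prop) (fun w s => by ring)
      (fun v => by simp only [hlog]) (ConcreteAux.pi_int1 hτ hβ j l)]
  exact ConcreteAux.pi_main hτ hβ i j k l
end

section
/- Let K ≥ 2, τ > 0, α ∈ ℝ^K with all α_i > 0, and β ∈ ℝ^K with all β_i > 0, and let X have the inverse Schlömilch distribution IS(α, β, τ). Then for all indices i, k, the log-ratio variance satisfies Var[log(X_i/X_k)] = (1/τ²)(1 − δ_{ik})[ψ'(α_i) + ψ'(α_k)], where ψ' is the trigamma function and δ is the Kronecker delta. -/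
open MeasureTheory Finset

/-- The density of the inverse Schlömilch distribution `IS(α, β, τ)` on the simplex. -/
noncomputable def isDensity (K : ℕ) (α β : Fin K → ℝ) (τ : ℝ) (x : Fin K → ℝ) : ℝ :=
  τ ^ (K - 1) * Real.Gamma (∑ i, α i) * (∑ j, β j / x j ^ τ) ^ (-(∑ i, α i)) *
    ∏ i, β i ^ (α i) / (Real.Gamma (α i) * x i ^ (τ * α i + 1))

/-- The digamma function `ψ = Γ'/Γ`. -/
noncomputable def digamma (x : ℝ) : ℝ := deriv Real.Gamma x / Real.Gamma x

/-- The trigamma function `ψ'`, the derivative of the digamma function. -/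
noncomputable def trigamma (x : ℝ) : ℝ := deriv digamma x

lemma oneD (τ : ℝ) (hτ : 0 < τ) (a b : ℝ) (ha : 0 < a) (hb : 0 < b) :
    IntegrableOn (fun x : ℝ => (x ^ (τ * a + 1))⁻¹ * Real.exp (-(b / x ^ τ))) (Set.Ioi 0) ∧
    ∫ x in Set.Ioi (0:ℝ), (x ^ (τ * a + 1))⁻¹ * Real.exp (-(b / x ^ τ))
      = Real.Gamma a * b ^ (-a) / τ := by
  set g : ℝ → ℝ := fun y => y ^ (a - 1) * Real.exp (-(b * y)) with hg
  have hval : ∫ y in Set.Ioi (0:ℝ), g y = (1 / b) ^ a * Real.Gamma a :=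
    Real.integral_rpow_mul_exp_neg_mul_Ioi ha hb
  have hbp : 0 < (1 / b) ^ a * Real.Gamma a := by
    have := Real.Gamma_pos_of_pos ha
    positivity
  have hint : IntegrableOn g (Set.Ioi 0) := by
    by_contra h
    have := integral_undef h
    rw [hval] at this
    exact hbp.ne' this
  have hp : -τ ≠ 0 := by linarith
  have h1 := (integrableOn_Ioi_comp_rpow_iff g hp).2 hint
  have h2 := integral_comp_rpow_Ioi g hp
  have key : ∀ x ∈ Set.Ioi (0:ℝ), (|-τ| * x ^ (-τ - 1)) • g (x ^ (-τ))
      = τ * ((x ^ (τ * a + 1))⁻¹ * Real.exp (-(b / x ^ τ))) := by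
    intro x hx
    have hx : 0 < x := hx
    simp only [hg, smul_eq_mul, abs_neg, abs_of_pos hτ]
    rw [← Real.rpow_mul hx.le, div_eq_mul_inv, ← Real.rpow_neg hx.le, ← Real.rpow_neg hx.le,
      show -(τ * a + 1) = (-τ - 1) + -τ * (a - 1) by ring, Real.rpow_add hx]
    ring
  rw [integrableOn_congr_fun key measurableSet_Ioi] at h1
  rw [setIntegral_congr_fun measurableSet_Ioi key, integral_const_mul, hval] at h2
  constructor
  · have := h1.const_mul τ⁻¹
    refine (integrable_congr ?_).1 this
    filter_upwards with x
    field_simp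
  · rw [eq_div_iff hτ.ne', mul_comm, h2, one_div, Real.inv_rpow hb.le, Real.rpow_neg hb.le]
    ring

noncomputable def pp (τ a b x : ℝ) : ℝ :=
  (Set.Ici (0:ℝ)).indicator (fun x => (x ^ (τ * a + 1))⁻¹ * Real.exp (-(b / x ^ τ))) x

lemma pp_nonneg (τ a b x : ℝ) : 0 ≤ pp τ a b x := by
  unfold pp
  apply Set.indicator_nonneg
  intro x hx
  have hx : 0 ≤ x := hx
  positivity

lemma pp_meas (τ a b : ℝ) : Measurable (pp τ a b) := by
  unfold pp
  apply Measurable.indicator _ measurableSet_Ici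
  fun_prop

lemma pp_int (τ : ℝ) (hτ : 0 < τ) (a b : ℝ) (ha : 0 < a) (hb : 0 < b) :
    Integrable (pp τ a b) ∧ ∫ x, pp τ a b x = Real.Gamma a * b ^ (-a) / τ := by
  have h := oneD τ hτ a b ha hb
  unfold pp
  rw [integral_indicator measurableSet_Ici, integrable_indicator_iff measurableSet_Ici,
    integral_Ici_eq_integral_Ioi, integrableOn_Ici_iff_integrableOn_Ioi]
  exact h

lemma fill_last (n : ℕ) (u : Fin n → ℝ) : fillMap (n+1) u (Fin.last n) = 1 - ∑ j, u j := by
  simp [fillMap]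

lemma fill_cast (n : ℕ) (u : Fin n → ℝ) (j : Fin n) : fillMap (n+1) u j.castSucc = u j := by
  simp [fillMap]

lemma fill_meas (n : ℕ) : Measurable (fillMap (n+1)) := by
  rw [measurable_pi_iff]
  intro i
  refine Fin.lastCases ?_ (fun j => ?_) i
  · simp only [fill_last]; exact measurable_const.sub (Finset.measurable_sum _ fun j _ => measurable_pi_apply j)
  · simp only [fill_cast]; exact measurable_pi_apply j

lemma lint_smul (n : ℕ) (G : (Fin n → ℝ) → ENNReal) (hG : Measurable G) (r : ℝ) (hr : 0 < r) :
    ∫⁻ v, G v = ENNReal.ofReal (r ^ n) * ∫⁻ u, G (r • u) := by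
  have h := Measure.map_addHaar_smul (volume : Measure (Fin n → ℝ)) hr.ne'
  have h2 : ∫⁻ u, G (r • u) = ∫⁻ v, G v ∂(Measure.map (r • ·) (volume : Measure (Fin n → ℝ))) := by
    rw [lintegral_map hG (measurable_const_smul r)]
  rw [h2, h, lintegral_smul_measure, smul_eq_mul, ← mul_assoc, ← ENNReal.ofReal_mul (by positivity),
    abs_of_pos (by positivity)]
  simp [hr.ne']

lemma polar (n : ℕ) (F : (Fin (n+1) → ℝ) → ENNReal) (hF : Measurable F)
    (h0 : ∀ x, (∃ j, x j < 0) → F x = 0) :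
    ∫⁻ x, F x = ∫⁻ r in Set.Ioi (0:ℝ), ENNReal.ofReal (r ^ n) *
      ∫⁻ u : Fin n → ℝ, F (r • fillMap (n+1) u) := by
  have e := (volume_preserving_piFinSuccAbove (fun _ : Fin (n+1) => ℝ) (Fin.last n)).symm
  have hF' : Measurable (fun p : ℝ × (Fin n → ℝ) => F (Fin.snoc p.2 p.1)) := by
    refine hF.comp ?_
    rw [measurable_pi_iff]
    intro i
    refine Fin.lastCases ?_ (fun j => ?_) i
    · simp only [Fin.snoc_last]; exact measurable_fst
    · simp only [Fin.snoc_castSucc]; exact (measurable_pi_apply j).comp measurable_snd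
  have h1 : ∫⁻ x, F x = ∫⁻ p : ℝ × (Fin n → ℝ), F (Fin.snoc p.2 p.1) := by
    rw [← e.lintegral_comp hF]
    congr 1
    ext p
    congr 1
    simp [MeasurableEquiv.piFinSuccAbove]
    rfl
  have hF2 : Measurable (fun p : ℝ × (Fin n → ℝ) => F (Fin.snoc p.2 (p.1 - ∑ j, p.2 j))) := by
    have : Measurable (fun p : ℝ × (Fin n → ℝ) => ((p.1 - ∑ j, p.2 j, p.2) : ℝ × (Fin n → ℝ))) := by
      fun_prop
    exact hF'.comp this
  have h2 : ∫⁻ x, F x = ∫⁻ r : ℝ, ∫⁻ v : Fin n → ℝ, F (Fin.snoc v (r - ∑ j, v j)) := by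
    rw [h1, Measure.volume_eq_prod, lintegral_prod_symm _ hF'.aemeasurable,
      lintegral_lintegral_swap (f := fun (r : ℝ) (v : Fin n → ℝ) =>
        F (Fin.snoc v (r - ∑ j, v j))) hF2.aemeasurable]
    congr 1
    ext v
    exact (lintegral_sub_right_eq_self (fun z => F (Fin.snoc v z)) (∑ j, v j)).symm
  rw [h2, ← lintegral_indicator measurableSet_Ioi]
  apply lintegral_congr_ae
  have : ∀ᵐ r : ℝ, r ≠ 0 := by simp [ae_iff]
  filter_upwards [this] with r hr
  rcases lt_or_gt_of_ne hr with h | h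
  · rw [Set.indicator_of_notMem (by simp [h.le])]
    rw [lintegral_eq_zero_iff (hF2.of_uncurry_left (f := fun (r : ℝ) (v : Fin n → ℝ) =>
        F (Fin.snoc v (r - ∑ j, v j))))]
    filter_upwards with v
    apply h0
    by_contra hc
    push Not at hc
    have ha := hc (Fin.last n)
    simp only [Fin.snoc_last] at ha
    have hb : 0 ≤ ∑ j, v j := Finset.sum_nonneg fun j _ => by
      have := hc j.castSucc
      simpa only [Fin.snoc_castSucc] using this
    linarith
  · rw [Set.indicator_of_mem (by exact h), lint_smul n (fun v : Fin n → ℝ =>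
        F (Fin.snoc v (r - ∑ j, v j))) (hF2.of_uncurry_left (f := fun (r : ℝ) (v : Fin n → ℝ) =>
        F (Fin.snoc v (r - ∑ j, v j)))) r h]
    congr 1
    apply lintegral_congr
    intro u
    congr 1
    ext i
    refine Fin.lastCases ?_ (fun j => ?_) i
    · simp only [Fin.snoc_last, Pi.smul_apply, fill_last, smul_eq_mul, mul_sub, Finset.mul_sum, mul_one]
    · simp only [Fin.snoc_castSucc, Pi.smul_apply, fill_cast]

def TT (n : ℕ) : Set (Fin n → ℝ) := {u | (∀ j, 0 ≤ u j) ∧ ∑ j, u j ≤ 1}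

lemma TT_meas (n : ℕ) : MeasurableSet (TT n) := by
  unfold TT
  apply MeasurableSet.inter
  · have : {u : Fin n → ℝ | ∀ j, 0 ≤ u j} = ⋂ j, {u | 0 ≤ u j} := by ext; simp
    change MeasurableSet {u : Fin n → ℝ | ∀ j, 0 ≤ u j}
    rw [this]
    exact MeasurableSet.iInter fun j => measurableSet_le measurable_const (measurable_pi_apply j)
  · exact measurableSet_le (Finset.measurable_sum _ fun j _ => measurable_pi_apply j) measurable_const

lemma fill_nonneg_iff (n : ℕ) (u : Fin n → ℝ) : (∀ j, 0 ≤ fillMap (n+1) u j) ↔ u ∈ TT n := by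
  rw [Fin.forall_fin_succ']
  simp only [fill_cast, fill_last, sub_nonneg]
  rfl

lemma dens_meas (K : ℕ) (α β : Fin K → ℝ) (τ : ℝ) : Measurable (isDensity K α β τ) := by
  unfold isDensity
  fun_prop

lemma dens_nonneg (K : ℕ) (α β : Fin K → ℝ) (τ : ℝ) (hτ : 0 < τ) (hα : ∀ i, 0 < α i)
    (hβ : ∀ i, 0 < β i) (x : Fin K → ℝ) (hx : ∀ i, 0 ≤ x i) : 0 ≤ isDensity K α β τ x := by
  unfold isDensity
  have h1 : 0 ≤ Real.Gamma (∑ i, α i) := by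
    rcases (Finset.sum_nonneg fun i _ => (hα i).le : 0 ≤ ∑ i, α i).eq_or_lt with h | h
    · rw [← h, Real.Gamma_zero]
    · exact (Real.Gamma_pos_of_pos h).le
  have h2 : 0 ≤ ∑ j, β j / x j ^ τ := Finset.sum_nonneg fun i _ => by
    have := hx i; have := hβ i; positivity
  have h3 : 0 ≤ ∏ i, β i ^ (α i) / (Real.Gamma (α i) * x i ^ (τ * α i + 1)) :=
    Finset.prod_nonneg fun i _ => by
      have := hx i; have := hβ i; have := Real.Gamma_pos_of_pos (hα i); positivity
  positivity

lemma rint (n : ℕ) (α β : Fin (n+1) → ℝ) (τ : ℝ) (hτ : 0 < τ) (hα : ∀ i, 0 < α i)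
    (hβ : ∀ i, 0 < β i) (x : Fin (n+1) → ℝ) (hx : ∀ i, 0 ≤ x i) :
    ∫⁻ r in Set.Ioi (0:ℝ), ENNReal.ofReal (r ^ n) *
      ENNReal.ofReal (∏ j, pp τ (α j) (β j) ((r • x) j)) =
    ENNReal.ofReal (∏ j, (Real.Gamma (α j) * (β j) ^ (-(α j)) / τ)) *
      ENNReal.ofReal (isDensity (n+1) α β τ x) := by
  set P := ∏ j, (x j ^ (τ * α j + 1))⁻¹ with hP
  set S := ∑ j, β j / x j ^ τ with hS
  have hP0 : 0 ≤ P := Finset.prod_nonneg fun i _ => by have := hx i; positivity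
  have hap : 0 < ∑ j, α j := Finset.sum_pos (fun i _ => hα i) ⟨0, Finset.mem_univ _⟩
  have hd : (∏ j, (Real.Gamma (α j) * (β j) ^ (-(α j)) / τ)) * isDensity (n+1) α β τ x
      = P * (Real.Gamma (∑ j, α j) * S ^ (-∑ j, α j) / τ) := by
    unfold isDensity
    have : (∏ j, (Real.Gamma (α j) * (β j) ^ (-(α j)) / τ)) *
        ∏ i, β i ^ (α i) / (Real.Gamma (α i) * x i ^ (τ * α i + 1)) = P * (τ ^ (n+1))⁻¹ := by
      have hc : (τ ^ (n+1))⁻¹ = ∏ j : Fin (n+1), τ⁻¹ := by simp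
      rw [hc, hP, ← Finset.prod_mul_distrib, ← Finset.prod_mul_distrib]
      apply Finset.prod_congr rfl
      intro j _
      have h1 := (Real.Gamma_pos_of_pos (hα j)).ne'
      have h2 : β j ^ α j ≠ 0 := (Real.rpow_pos_of_pos (hβ j) _).ne'
      rw [Real.rpow_neg (hβ j).le, mul_comm (Real.Gamma (α j)) (x j ^ _), ← div_div]
      field_simp
    rw [← hS, show n + 1 - 1 = n from rfl]
    calc _ = τ ^ n * Real.Gamma (∑ i, α i) * S ^ (-∑ i, α i) * ((∏ j, (Real.Gamma (α j) * (β j) ^ (-(α j)) / τ)) *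
        ∏ i, β i ^ (α i) / (Real.Gamma (α i) * x i ^ (τ * α i + 1))) := by ring
      _ = _ := by
        rw [this]
        field_simp
        ring
  rw [← ENNReal.ofReal_mul (Finset.prod_nonneg fun i _ => by
    have := hβ i; have := Real.Gamma_pos_of_pos (hα i); positivity), hd]
  have hpt : ∀ r ∈ Set.Ioi (0:ℝ), ENNReal.ofReal (r ^ n) *
      ENNReal.ofReal (∏ j, pp τ (α j) (β j) ((r • x) j)) = ENNReal.ofReal
        (P * ((r ^ (τ * (∑ j, α j) + 1))⁻¹ * Real.exp (-(S / r ^ τ)))) := by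
    intro r hr
    have hr : 0 < r := hr
    rw [← ENNReal.ofReal_mul (by positivity)]
    congr 1
    have : ∀ j, pp τ (α j) (β j) ((r • x) j) = (r ^ (τ * α j + 1))⁻¹ * (x j ^ (τ * α j + 1))⁻¹
        * Real.exp (-(β j / x j ^ τ / r ^ τ)) := by
      intro j
      have hxj := hx j
      unfold pp
      rw [Set.indicator_of_mem (by simp only [Pi.smul_apply, smul_eq_mul, Set.mem_Ici]; positivity)]
      simp only [Pi.smul_apply, smul_eq_mul]
      rw [Real.mul_rpow hr.le hxj, Real.mul_rpow hr.le hxj, mul_inv, div_div, mul_comm (x j ^ τ)]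
    simp_rw [this, Finset.prod_mul_distrib]
    rw [← hP, ← Real.exp_sum, Finset.sum_neg_distrib, ← Finset.sum_div, ← hS]
    have h3 : ∏ j, (r ^ (τ * α j + 1))⁻¹ = (r ^ (τ * (∑ j, α j) + 1))⁻¹ * (r ^ n)⁻¹ := by
      rw [Finset.prod_inv_distrib, ← Real.rpow_sum_of_pos hr, ← mul_inv, ← Real.rpow_natCast r n,
        ← Real.rpow_add hr]
      congr 2
      rw [Finset.sum_add_distrib, ← Finset.mul_sum]
      simp
      ring
    rw [h3]
    field_simp
  rw [setLIntegral_congr_fun measurableSet_Ioi hpt]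
  by_cases hz : P = 0
  · simp [hz]
  have hSpos : 0 < S := by
    apply Finset.sum_pos _ ⟨0, Finset.mem_univ _⟩
    intro j _
    have : x j ≠ 0 := by
      intro h
      apply hz
      apply Finset.prod_eq_zero (Finset.mem_univ j)
      rw [h, Real.zero_rpow (by have := hα j; positivity), inv_zero]
    have := lt_of_le_of_ne (hx j) this.symm
    have := hβ j
    positivity
  obtain ⟨h1, h2⟩ := oneD τ hτ _ S hap hSpos
  rw [← ofReal_integral_eq_lintegral_ofReal (h1.const_mul P), integral_const_mul, h2]
  filter_upwards [ae_restrict_mem measurableSet_Ioi] with r hr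
  have hr : 0 < r := hr
  positivity

lemma density_total_mass (n : ℕ) (α β : Fin (n+1) → ℝ) (τ : ℝ) (hτ : 0 < τ) (hα : ∀ i, 0 < α i)
    (hβ : ∀ i, 0 < β i) :
    ∫⁻ x, ENNReal.ofReal (isDensity (n+1) α β τ x) ∂(simplexMeasure (n+1)) = 1 := by
  have hdm := dens_meas (n+1) α β τ
  unfold simplexMeasure
  rw [lintegral_map (by fun_prop) (fill_meas n)]
  set C := ∏ j, (Real.Gamma (α j) * (β j) ^ (-(α j)) / τ) with hC
  have hCpos : 0 < C := Finset.prod_pos fun i _ => by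
    have := hβ i; have := Real.Gamma_pos_of_pos (hα i); positivity
  set F : (Fin (n+1) → ℝ) → ENNReal := fun x => ENNReal.ofReal (∏ j, pp τ (α j) (β j) (x j)) with hF
  have hprodm : Measurable (fun x : Fin (n+1) → ℝ => ∏ j, pp τ (α j) (β j) (x j)) :=
    Finset.measurable_prod _ fun j _ => (pp_meas _ _ _).comp (measurable_pi_apply j)
  have hFm : Measurable F := hprodm.ennreal_ofReal
  have hF0 : ∀ x, (∃ j, x j < 0) → F x = 0 := by
    rintro x ⟨j, hj⟩
    have : ∏ j, pp τ (α j) (β j) (x j) = 0 := by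
      apply Finset.prod_eq_zero (Finset.mem_univ j)
      unfold pp
      rw [Set.indicator_of_notMem (by simpa using hj)]
    simp [hF, this]
  have htot : ∫⁻ x, F x = ENNReal.ofReal C := by
    rw [hF, ← ofReal_integral_eq_lintegral_ofReal]
    · rw [integral_fintype_prod_volume_eq_prod (fun j => pp τ (α j) (β j))]
      congr 1
      exact Finset.prod_congr rfl fun j _ => (pp_int τ hτ _ _ (hα j) (hβ j)).2
    · exact Integrable.fintype_prod fun j => (pp_int τ hτ _ _ (hα j) (hβ j)).1
    · filter_upwards with x
      exact Finset.prod_nonneg fun j _ => pp_nonneg _ _ _ _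
  rw [polar n F hFm hF0] at htot
  have hjoint : Measurable (fun p : ℝ × (Fin n → ℝ) =>
      ENNReal.ofReal (p.1 ^ n) * F (p.1 • fillMap (n+1) p.2)) := by
    have h1 : Measurable (fun p : ℝ × (Fin n → ℝ) => p.1 • fillMap (n+1) p.2) :=
      measurable_fst.smul ((fill_meas n).comp measurable_snd)
    have h2 := hFm.comp h1
    exact (by fun_prop : Measurable (fun p : ℝ × (Fin n → ℝ) => ENNReal.ofReal (p.1 ^ n))).mul h2
  have hsw : ∫⁻ r in Set.Ioi (0:ℝ), ENNReal.ofReal (r ^ n) *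
      ∫⁻ u : Fin n → ℝ, F (r • fillMap (n+1) u) =
      ∫⁻ u : Fin n → ℝ, ∫⁻ r in Set.Ioi (0:ℝ), ENNReal.ofReal (r ^ n) *
       F (r • fillMap (n+1) u) := by
    rw [← lintegral_lintegral_swap (f := fun (r : ℝ) (u : Fin n → ℝ) =>
      ENNReal.ofReal (r ^ n) * F (r • fillMap (n+1) u)) hjoint.aemeasurable]
    congr 1
    ext r
    rw [lintegral_const_mul]
    exact hFm.comp ((fill_meas n).const_smul r)
  have hrw : ∀ u : Fin n → ℝ, ∫⁻ r in Set.Ioi (0:ℝ), ENNReal.ofReal (r ^ n) *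
       F (r • fillMap (n+1) u) = (TT n).indicator (fun u => ENNReal.ofReal C *
        ENNReal.ofReal (isDensity (n+1) α β τ (fillMap (n+1) u))) u := by
    intro u
    by_cases hu : u ∈ TT n
    · rw [Set.indicator_of_mem hu]
      exact rint n α β τ hτ hα hβ _ ((fill_nonneg_iff n u).2 hu)
    · rw [Set.indicator_of_notMem hu]
      rw [← fill_nonneg_iff] at hu
      push Not at hu
      obtain ⟨j, hj⟩ := hu
      rw [setLIntegral_congr_fun (g := fun _ => 0) measurableSet_Ioi]
      · simp
      intro r hr
      have : F (r • fillMap (n+1) u) = 0 := hF0 _ ⟨j, by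
        simp only [Pi.smul_apply, smul_eq_mul]; exact mul_neg_of_pos_of_neg hr hj⟩
      simp [this]
  rw [hsw] at htot
  simp_rw [hrw] at htot
  rw [lintegral_indicator (TT_meas n), lintegral_const_mul _ (by
    have := (hdm.comp (fill_meas n)).ennreal_ofReal
    exact this)] at htot
  have hne : ENNReal.ofReal C ≠ 0 := by simpa using hCpos
  have := (ENNReal.mul_right_inj hne ENNReal.ofReal_ne_top).1 (htot.trans (mul_one _).symm)
  exact this

lemma digamma_diff (a : ℝ) (ha : 0 < a) : DifferentiableAt ℝ digamma a := by
  have hdiff : ∀ x : ℝ, 0 < x → DifferentiableAt ℝ Real.Gamma x := fun x hx =>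
    Real.differentiableAt_Gamma fun m => by
      have : (0:ℝ) ≤ m := m.cast_nonneg
      intro h; linarith
  have hop : IsOpen {z : ℂ | 0 < z.re} := isOpen_lt continuous_const Complex.continuous_re
  have hc : ∀ z : ℂ, 0 < z.re → DifferentiableAt ℂ Complex.Gamma z := fun z hz =>
    Complex.differentiableAt_Gamma z fun m h => by
      have : (0:ℝ) ≤ m := m.cast_nonneg
      rw [h] at hz
      simp at hz
      linarith
  have hon : DifferentiableOn ℂ Complex.Gamma {z : ℂ | 0 < z.re} := fun z hz =>
    (hc z hz).differentiableWithinAt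
  have hd : DifferentiableAt ℂ (deriv Complex.Gamma) a :=
    (hon.deriv hop).differentiableAt (hop.mem_nhds (by simpa using ha))
  have hr := hd.hasDerivAt.real_of_complex
  have heq : (fun x : ℝ => (deriv Complex.Gamma x).re) =ᶠ[nhds a] deriv Real.Gamma := by
    filter_upwards [lt_mem_nhds ha] with x hx
    have h1 := (hc x (by simpa using hx)).hasDerivAt.real_of_complex
    have h2 : (fun x : ℝ => (Complex.Gamma x).re) = Real.Gamma := by
      ext y; rw [Complex.Gamma_ofReal, Complex.ofReal_re]
    rw [h2] at h1
    exact h1.deriv.symm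
  have h3 : DifferentiableAt ℝ (deriv Real.Gamma) a := heq.differentiableAt_iff.1 hr.differentiableAt
  exact h3.div (hdiff a ha) (Real.Gamma_pos_of_pos ha).ne'

lemma second_deriv (K : ℕ) (α b s : Fin K → ℝ) (hα : ∀ i, 0 < α i) (c : ℝ) :
    iteratedDeriv 2 (fun t : ℝ => ∑ j, (Real.log (Real.Gamma (α j + s j * t)) - (α j + s j * t) * b j) - c) 0
      = ∑ j, s j ^ 2 * trigamma (α j) := by
  rw [iteratedDeriv_succ, iteratedDeriv_one]
  have hev : ∀ᶠ t in nhds (0:ℝ), ∀ j, 0 < α j + s j * t := by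
    rw [Filter.eventually_all]
    intro j
    have : ContinuousAt (fun t => α j + s j * t) 0 := by fun_prop
    exact this.eventually_const_lt (by simpa using hα j)
  have h1 : deriv (fun t : ℝ => ∑ j, (Real.log (Real.Gamma (α j + s j * t)) - (α j + s j * t) * b j) - c)
      =ᶠ[nhds 0] fun t => ∑ j, (s j * digamma (α j + s j * t) - s j * b j) := by
    filter_upwards [hev] with t ht
    apply HasDerivAt.deriv
    apply HasDerivAt.sub_const
    apply HasDerivAt.fun_sum
    intro j _
    have hl : HasDerivAt (fun t => α j + s j * t) (s j) t := by
      simpa using ((hasDerivAt_id t).const_mul (s j)).const_add (α j)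
    have hg : DifferentiableAt ℝ Real.Gamma (α j + s j * t) :=
      Real.differentiableAt_Gamma fun m h => by
        have : (0:ℝ) ≤ m := m.cast_nonneg
        have := ht j
        linarith
    have hG0 : HasDerivAt (fun t => Real.Gamma (α j + s j * t))
        (deriv Real.Gamma (α j + s j * t) * s j) t :=
      HasDerivAt.comp (h₂ := Real.Gamma) (h := fun t => α j + s j * t) t hg.hasDerivAt hl
    have hG := hG0.log (Real.Gamma_pos_of_pos (ht j)).ne'
    refine (hG.fun_sub (hl.mul_const (b j))).congr_deriv ?_
    unfold digamma
    ring
  rw [h1.deriv_eq]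
  apply HasDerivAt.deriv
  apply HasDerivAt.fun_sum
  intro j _
  apply HasDerivAt.sub_const
  have hl : HasDerivAt (fun t => α j + s j * t) (s j) 0 := by
    simpa using ((hasDerivAt_id (0:ℝ)).const_mul (s j)).const_add (α j)
  have hd : HasDerivAt digamma (trigamma (α j)) (α j + s j * 0) := by
    rw [mul_zero, add_zero]; exact (digamma_diff _ (hα j)).hasDerivAt
  have hc : HasDerivAt (fun t => digamma (α j + s j * t)) (trigamma (α j) * s j) 0 :=
    HasDerivAt.comp (h₂ := digamma) (h := fun t => α j + s j * t) 0 hd hl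
  refine (hc.const_mul (s j)).congr_deriv ?_
  ring

noncomputable def cc {K : ℕ} (α β : Fin K → ℝ) : ℝ := ∏ j, (Real.Gamma (α j) * (β j) ^ (-(α j)))

lemma cc_pos {K : ℕ} (α β : Fin K → ℝ) (hα : ∀ i, 0 < α i) (hβ : ∀ i, 0 < β i) : 0 < cc α β :=
  Finset.prod_pos fun i _ => by
    have := hβ i; have := Real.Gamma_pos_of_pos (hα i); positivity

lemma cc_dens {K : ℕ} (α β : Fin K → ℝ) (τ : ℝ) (hα : ∀ i, 0 < α i) (hβ : ∀ i, 0 < β i)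
    (x : Fin K → ℝ) : cc α β * isDensity K α β τ x =
      τ ^ (K - 1) * Real.Gamma (∑ i, α i) * (∑ j, β j / x j ^ τ) ^ (-(∑ i, α i)) *
        ∏ i, (x i ^ (τ * α i + 1))⁻¹ := by
  unfold cc isDensity
  rw [mul_left_comm, ← Finset.prod_mul_distrib]
  congr 1
  apply Finset.prod_congr rfl
  intro j _
  have h1 := (Real.Gamma_pos_of_pos (hα j)).ne'
  have h2 : β j ^ α j ≠ 0 := (Real.rpow_pos_of_pos (hβ j) _).ne'
  rw [Real.rpow_neg (hβ j).le, mul_comm (Real.Gamma (α j)) (x j ^ _), ← div_div]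
  field_simp

noncomputable def ss {K : ℕ} (τ : ℝ) (i k : Fin K) (j : Fin K) : ℝ :=
  ((if j = k then 1 else 0) - (if j = i then 1 else 0)) / τ

lemma shift_dens {K : ℕ} (α β : Fin K → ℝ) (τ : ℝ) (hτ : 0 < τ) (hα : ∀ i, 0 < α i)
    (hβ : ∀ i, 0 < β i) (i k : Fin K) (t : ℝ) (hα' : ∀ j, 0 < α j + ss τ i k j * t)
    (x : Fin K → ℝ) (hx : ∀ j, 0 ≤ x j) :
    Real.exp (t * Real.log (x i / x k)) * isDensity K α β τ x =
      cc (fun j => α j + ss τ i k j * t) β / cc α β *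
        isDensity K (fun j => α j + ss τ i k j * t) β τ x := by
  have h0 := (cc_pos α β hα hβ).ne'
  rw [div_mul_eq_mul_div, eq_div_iff h0, mul_assoc, mul_comm _ (cc α β), cc_dens _ _ _ hα hβ,
    cc_dens _ _ _ hα' hβ]
  have hs : ∑ j, (α j + ss τ i k j * t) = ∑ j, α j := by
    rw [Finset.sum_add_distrib, ← Finset.sum_mul]
    simp [ss, ← Finset.sum_div]
  rw [hs, mul_left_comm]
  congr 1
  by_cases hz : ∃ j, x j = 0
  · obtain ⟨j, hj⟩ := hz
    rw [Finset.prod_eq_zero (Finset.mem_univ j), Finset.prod_eq_zero (Finset.mem_univ j), mul_zero]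
    · rw [hj, Real.zero_rpow (by have := hα' j; positivity), inv_zero]
    · rw [hj, Real.zero_rpow (by have := hα j; positivity), inv_zero]
  push Not at hz
  have hp : ∀ j, 0 < x j := fun j => lt_of_le_of_ne (hx j) (hz j).symm
  have e1 : ∀ a : Fin K → ℝ, ∏ j, (x j ^ a j)⁻¹ = Real.exp (∑ j, -(Real.log (x j) * a j)) := by
    intro a
    rw [Real.exp_sum]
    apply Finset.prod_congr rfl
    intro j _
    rw [Real.rpow_def_of_pos (hp j), Real.exp_neg]
  rw [e1 (fun j => τ * α j + 1), e1 (fun j => τ * (α j + ss τ i k j * t) + 1), ← Real.exp_add]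
  congr 1
  rw [Real.log_div (hp i).ne' (hp k).ne']
  have e2 : t * (Real.log (x i) - Real.log (x k)) = ∑ j, -(Real.log (x j) * (τ * (ss τ i k j * t))) := by
    have : ∀ j, -(Real.log (x j) * (τ * (ss τ i k j * t))) =
       t * ((if j = i then Real.log (x j) else 0) - (if j = k then Real.log (x j) else 0)) := by
      intro j
      unfold ss
      split_ifs <;> field_simp <;> ring
    simp_rw [this, ← Finset.mul_sum, Finset.sum_sub_distrib]
    simp
  rw [e2, ← Finset.sum_add_distrib]
  apply Finset.sum_congr rfl
  intro j _
  ring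

lemma simplex_ae_nonneg (n : ℕ) : ∀ᵐ x ∂(simplexMeasure (n+1)), ∀ j, 0 ≤ x j := by
  unfold simplexMeasure
  rw [ae_map_iff (fill_meas n).aemeasurable]
  · filter_upwards [ae_restrict_mem (TT_meas n)] with u hu
    exact (fill_nonneg_iff n u).2 hu
  · have : {x : Fin (n+1) → ℝ | ∀ j, 0 ≤ x j} = ⋂ j, {u | 0 ≤ u j} := by ext; simp
    rw [this]
    exact MeasurableSet.iInter fun j => measurableSet_le measurable_const (measurable_pi_apply j)

lemma main_aux (n : ℕ) (τ : ℝ) (hτ : 0 < τ)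
    (α β : Fin (n+1) → ℝ) (hα : ∀ i, 0 < α i) (hβ : ∀ i, 0 < β i) (i k : Fin (n+1)) :
    (∫ x, Real.log (x i / x k) ^ 2 * isDensity (n+1) α β τ x ∂(simplexMeasure (n+1)))
      - (∫ x, Real.log (x i / x k) * isDensity (n+1) α β τ x ∂(simplexMeasure (n+1))) ^ 2
      = ∑ j, ss τ i k j ^ 2 * trigamma (α j) := by
  have hdm := fun α' : Fin (n+1) → ℝ => dens_meas (n+1) α' β τ
  have hnn : ∀ α' : Fin (n+1) → ℝ, (∀ j, 0 < α' j) →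
      ∀ᵐ x ∂(simplexMeasure (n+1)), 0 ≤ isDensity (n+1) α' β τ x := by
    intro α' h'
    filter_upwards [simplex_ae_nonneg n] with x hx
    exact dens_nonneg _ _ _ _ hτ h' hβ _ hx
  have hint : ∀ α' : Fin (n+1) → ℝ, (∀ j, 0 < α' j) →
      Integrable (isDensity (n+1) α' β τ) (simplexMeasure (n+1)) ∧
      ∫ x, isDensity (n+1) α' β τ x ∂(simplexMeasure (n+1)) = 1 := by
    intro α' h'
    have h1 := density_total_mass n α' β τ hτ h' hβ
    have hi : Integrable (isDensity (n+1) α' β τ) (simplexMeasure (n+1)) := by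
      refine ⟨(hdm α').aestronglyMeasurable, ?_⟩
      rw [hasFiniteIntegral_iff_ofReal (hnn α' h'), h1]
      exact ENNReal.one_lt_top
    refine ⟨hi, ?_⟩
    rw [integral_eq_lintegral_of_nonneg_ae (hnn α' h') (hdm α').aestronglyMeasurable, h1]
    simp
  set f := isDensity (n+1) α β τ with hf
  set μ := (simplexMeasure (n+1)).withDensity (fun x => ENNReal.ofReal (f x)) with hμ
  have hpm : IsProbabilityMeasure μ := ⟨by
    rw [hμ, withDensity_apply _ MeasurableSet.univ, Measure.restrict_univ]
    exact density_total_mass n α β τ hτ hα hβ⟩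
  have htr : ∀ g : (Fin (n+1) → ℝ) → ℝ, ∫ x, g x ∂μ = ∫ x, g x * f x ∂(simplexMeasure (n+1)) := by
    intro g
    rw [hμ, integral_withDensity_eq_integral_toReal_smul (hdm α).ennreal_ofReal
      (by simp)]
    apply integral_congr_ae
    filter_upwards [hnn α hα] with x hx
    rw [ENNReal.toReal_ofReal hx, smul_eq_mul, mul_comm]
  set X : (Fin (n+1) → ℝ) → ℝ := fun x => Real.log (x i / x k) with hX
  have hev : ∀ᶠ t in nhds (0:ℝ), ∀ j, 0 < α j + ss τ i k j * t := by
    rw [Filter.eventually_all]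
    intro j
    have : ContinuousAt (fun t => α j + ss τ i k j * t) 0 := by fun_prop
    exact this.eventually_const_lt (by simpa using hα j)
  have hsh : ∀ t, (∀ j, 0 < α j + ss τ i k j * t) →
      (fun x => Real.exp (t * X x) * f x) =ᵐ[simplexMeasure (n+1)] fun x =>
      cc (fun j => α j + ss τ i k j * t) β / cc α β *
        isDensity (n+1) (fun j => α j + ss τ i k j * t) β τ x := by
    intro t ht
    filter_upwards [simplex_ae_nonneg n] with x hx
    exact shift_dens α β τ hτ hα hβ i k t ht x hx
  have hexp : ∀ t, (∀ j, 0 < α j + ss τ i k j * t) →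
      Integrable (fun x => Real.exp (t * X x)) μ := by
    intro t ht
    rw [hμ, integrable_withDensity_iff_integrable_smul' (hdm α).ennreal_ofReal (by simp)]
    refine (integrable_congr ?_).1 ((hint _ ht).1.const_mul
      (cc (fun j => α j + ss τ i k j * t) β / cc α β))
    filter_upwards [hsh t ht, hnn α hα] with x h1 h2
    rw [← h1, ENNReal.toReal_ofReal h2, smul_eq_mul, mul_comm]
  have hmgf : ∀ t, (∀ j, 0 < α j + ss τ i k j * t) → ProbabilityTheory.mgf X μ t =
      cc (fun j => α j + ss τ i k j * t) β / cc α β := by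
    intro t ht
    unfold ProbabilityTheory.mgf
    rw [htr, integral_congr_ae (hsh t ht), integral_const_mul, (hint _ ht).2, mul_one]
  have hmem : (0:ℝ) ∈ interior (ProbabilityTheory.integrableExpSet X μ) := by
    rw [mem_interior_iff_mem_nhds]
    filter_upwards [hev] with t ht
    exact hexp t ht
  have hlog : ∀ a : Fin (n+1) → ℝ, (∀ j, 0 < a j) →
      Real.log (cc a β) = ∑ j, (Real.log (Real.Gamma (a j)) - a j * Real.log (β j)) := by
    intro a ha
    unfold cc
    rw [Real.log_prod]
    · apply Finset.sum_congr rfl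
      intro j _
      rw [Real.log_mul (Real.Gamma_pos_of_pos (ha j)).ne' (Real.rpow_pos_of_pos (hβ j) _).ne',
        Real.log_rpow (hβ j)]
      ring
    · intro j _
      have := hβ j; have := Real.Gamma_pos_of_pos (ha j); positivity
  have hcgf : ProbabilityTheory.cgf X μ =ᶠ[nhds 0] fun t : ℝ =>
      ∑ j, (Real.log (Real.Gamma (α j + ss τ i k j * t))
        - (α j + ss τ i k j * t) * Real.log (β j)) - Real.log (cc α β) := by
    filter_upwards [hev] with t ht
    unfold ProbabilityTheory.cgf
    rw [hmgf t ht, Real.log_div (cc_pos _ β ht hβ).ne' (cc_pos _ β hα hβ).ne', hlog _ ht]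
  have h2 := ProbabilityTheory.iteratedDeriv_two_cgf hmem
  rw [hcgf.iteratedDeriv_eq 2, second_deriv _ _ _ _ hα, ProbabilityTheory.deriv_cgf_zero hmem] at h2
  rw [h2, ← htr, ← htr]
  simp [hX]

/-- Log-ratio variances of the inverse Schlömilch distribution:
`Var[log(X_i/X_k)] = (1/τ²)(1 − δ_ik)[ψ'(α_i) + ψ'(α_k)]`. -/
theorem is_log_ratio_variance
    (K : ℕ) (hK : 2 ≤ K) (τ : ℝ) (hτ : 0 < τ)
    (α β : Fin K → ℝ) (hα : ∀ i, 0 < α i) (hβ : ∀ i, 0 < β i) (i k : Fin K) :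
    (∫ x, Real.log (x i / x k) ^ 2 * isDensity K α β τ x ∂(simplexMeasure K))
      - (∫ x, Real.log (x i / x k) * isDensity K α β τ x ∂(simplexMeasure K)) ^ 2
      = (1 / τ ^ 2) * (1 - kd i k) * (trigamma (α i) + trigamma (α k)) := by
  obtain ⟨n, rfl⟩ : ∃ n, K = n + 1 := ⟨K - 1, by omega⟩
  rw [main_aux n τ hτ α β hα hβ i k]
  by_cases h : i = k
  · subst h
    simp [ss, kd]
  · have : ∀ j, ss τ i k j ^ 2 * trigamma (α j) = 1 / τ ^ 2 *
        ((if j = i then trigamma (α j) else 0) + (if j = k then trigamma (α j) else 0)) := by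
      intro j
      unfold ss
      by_cases h1 : j = i
      · subst h1
        simp [h, div_pow]
      · by_cases h2 : j = k
        · simp [h1, h2, div_pow, Ne.symm h]
        · simp [h1, h2]
    simp_rw [this, ← Finset.mul_sum, Finset.sum_add_distrib]
    simp [kd, h]
end

section
/- Let K ≥ 2, τ > 0, and β ∈ ℝ^K with all β_i > 0, and for α ∈ ℝ^K with all α_i > 0 let J(α) = ∫_{S_K} (∑_{j=1}^K β_j/x_j^τ)^{−α_+} ∏_{i=1}^K x_i^{−(τ α_i + 1)} d^{K−1}x where α_+ = ∑_{i=1}^K α_i. Then for all indices m, n, J(1 + e_m + e_n) = J_0 (1 + δ_{mn}) / (K(K+1) β_m β_n), where J_0 = J(1) = 1/((K−1)! τ^{K−1} ∏_{i=1}^K β_i), 1 + e_m + e_n denotes the vector with i-th component 1 + δ_{im} + δ_{in}, and δ is the Kronecker delta. -/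
open MeasureTheory Finset

/-- The unnormalized integral `J(α) = ∫_{S_K} (∑_j β_j/x_j^τ)^{-α_+} ∏_i x_i^{-(τα_i+1)}`. -/
noncomputable def Jint (K : ℕ) (β : Fin K → ℝ) (τ : ℝ) (α : Fin K → ℝ) : ℝ :=
  ∫ x, (∑ j, β j / x j ^ τ) ^ (-(∑ i, α i)) * ∏ i, x i ^ (-(τ * α i + 1))
    ∂(simplexMeasure K)

theorem aux_measurable_snoc (n : ℕ) :
    Measurable (fun p : (Fin n → ℝ) × ℝ => (Fin.snoc p.1 p.2 : Fin (n + 1) → ℝ)) := by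
  refine measurable_pi_iff.2 fun i => ?_
  refine Fin.lastCases ?_ (fun j => ?_) i
  · simpa using measurable_snd
  · simp only [Fin.snoc_castSucc]
    fun_prop

theorem aux_split (n : ℕ) (G : (Fin (n + 1) → ℝ) → ENNReal) (hG : Measurable G) :
    ∫⁻ y, G y = ∫⁻ v : Fin n → ℝ, ∫⁻ s : ℝ, G (Fin.snoc v s : Fin (n + 1) → ℝ) := by
  have h := (volume_preserving_piFinSuccAbove (fun _ : Fin (n + 1) => ℝ) (Fin.last n)).symm
  rw [← h.lintegral_comp hG, Measure.volume_eq_prod, lintegral_prod_symm]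
  · refine lintegral_congr fun v => lintegral_congr fun s => ?_
    congr 1
    simp [MeasurableEquiv.piFinSuccAbove]
    rfl
  · exact (hG.comp (MeasurableEquiv.measurable _)).aemeasurable

theorem aux_prod (n : ℕ) (g : Fin n → ℝ → ENNReal) (hg : ∀ i, Measurable (g i)) :
    ∫⁻ y : Fin n → ℝ, ∏ i, g i (y i) = ∏ i, ∫⁻ t, g i t := by
  induction n with
  | zero => simp [lintegral_unique, volume_pi]
  | succ n ih =>
    rw [aux_split n _ (by fun_prop)]
    simp only [Fin.prod_univ_castSucc, Fin.snoc_castSucc, Fin.snoc_last]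
    have : ∀ v : Fin n → ℝ, ∫⁻ s, (∏ i, g (Fin.castSucc i) (v i)) * g (Fin.last n) s
        = (∏ i, g (Fin.castSucc i) (v i)) * ∫⁻ s, g (Fin.last n) s := fun v =>
      lintegral_const_mul _ (hg _)
    simp only [this]
    rw [lintegral_mul_const _ (by fun_prop), ih _ (fun i => hg _)]

theorem aux_gamma (τ a b : ℝ) (hτ : 0 < τ) (ha : 0 < a) (hb : 0 < b) :
    ∫⁻ r in Set.Ioi (0 : ℝ), ENNReal.ofReal (r ^ (-(τ * a + 1)) * Real.exp (-(b * r ^ (-τ))))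
      = ENNReal.ofReal (1 / τ * ((1 / b) ^ a * Real.Gamma a)) := by
  have h := integral_comp_rpow_Ioi (fun t : ℝ => t ^ (a - 1) * Real.exp (-(b * t)))
    (neg_ne_zero.2 hτ.ne')
  rw [Real.integral_rpow_mul_exp_neg_mul_Ioi ha hb] at h
  have e : ∫ x in Set.Ioi (0 : ℝ), x ^ (-(τ * a + 1)) * Real.exp (-(b * x ^ (-τ)))
      = 1 / τ * ((1 / b) ^ a * Real.Gamma a) := by
    rw [← h, ← integral_const_mul]
    refine setIntegral_congr_fun measurableSet_Ioi fun x hx => ?_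
    have hx : 0 < x := hx
    simp only [smul_eq_mul, abs_neg, abs_of_pos hτ]
    rw [← Real.rpow_mul hx.le]
    have : x ^ (-(τ * a + 1)) = x ^ (-τ - 1) * x ^ (-τ * (a - 1)) := by
      rw [← Real.rpow_add hx]; congr 1; ring
    rw [this]
    field_simp
  have hpos : 0 < 1 / τ * ((1 / b) ^ a * Real.Gamma a) := by
    have := Real.Gamma_pos_of_pos ha
    positivity
  rw [← e, ofReal_integral_eq_lintegral_ofReal]
  · exact Integrable.of_integral_ne_zero (by rw [e]; exact hpos.ne')
  · rw [Filter.EventuallyLE, ae_restrict_iff' measurableSet_Ioi]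
    refine ae_of_all _ fun x (hx : 0 < x) => ?_
    simp only [Pi.zero_apply]
    positivity

/-- the simplex parametrisation -/
noncomputable def auxFill (n : ℕ) (u : Fin n → ℝ) : Fin (n + 1) → ℝ :=
  Fin.snoc u (1 - ∑ j, u j)

theorem auxFill_eq (n : ℕ) (u : Fin n → ℝ) : fillMap (n + 1) u = auxFill n u := by
  funext i
  refine Fin.lastCases ?_ (fun j => ?_) i
  · simp [fillMap, auxFill]
  · simp [fillMap, auxFill]

theorem aux_measurable_fill (n : ℕ) : Measurable (auxFill n) := by
  have := (aux_measurable_snoc n).comp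
    (f := fun u : Fin n → ℝ => (u, 1 - ∑ j, u j)) (by fun_prop)
  exact this

theorem auxFill_sum (n : ℕ) (u : Fin n → ℝ) : ∑ i, auxFill n u i = 1 := by
  simp [auxFill, Fin.sum_univ_castSucc]

theorem aux_scale (n : ℕ) (r : ℝ) (hr : 0 < r) (F : (Fin n → ℝ) → ENNReal) (hF : Measurable F) :
    ∫⁻ v, F v = ENNReal.ofReal (r ^ n) * ∫⁻ u, F (r • u) := by
  have h := Measure.map_addHaar_smul (volume : Measure (Fin n → ℝ)) hr.ne'
  have h2 : ∫⁻ u, F (r • u) = ENNReal.ofReal (|(r ^ n)⁻¹|) * ∫⁻ v, F v := by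
    rw [← lintegral_map (g := fun u : Fin n → ℝ => r • u) hF (by fun_prop), h,
      lintegral_smul_measure]
    simp
  rw [h2, ← mul_assoc, ← ENNReal.ofReal_mul (by positivity), abs_of_pos (by positivity),
    mul_inv_cancel₀ (by positivity)]
  simp

theorem aux_polar (n : ℕ) (G : (Fin (n + 1) → ℝ) → ENNReal) (hG : Measurable G)
    (h0 : ∀ y i, y i ≤ 0 → G y = 0) :
    ∫⁻ y, G y = ∫⁻ u : Fin n → ℝ, ∫⁻ r in Set.Ioi (0 : ℝ),
      ENNReal.ofReal (r ^ n) * G (r • auxFill n u) := by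
  have m1 : Measurable (fun p : (Fin n → ℝ) × ℝ =>
      G (Fin.snoc p.1 (p.2 - ∑ j, p.1 j) : Fin (n + 1) → ℝ)) := by
    refine hG.comp ((aux_measurable_snoc n).comp
      (f := fun p : (Fin n → ℝ) × ℝ => (p.1, p.2 - ∑ j, p.1 j)) ?_)
    fun_prop
  rw [aux_split n G hG]
  calc _ = ∫⁻ v : Fin n → ℝ, ∫⁻ r : ℝ, G (Fin.snoc v (r - ∑ j, v j) : Fin (n + 1) → ℝ) := by
        refine lintegral_congr fun v => ?_
        rw [lintegral_sub_right_eq_self (fun s => G (Fin.snoc v s : Fin (n + 1) → ℝ))]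
    _ = ∫⁻ r : ℝ, ∫⁻ v : Fin n → ℝ, G (Fin.snoc v (r - ∑ j, v j) : Fin (n + 1) → ℝ) :=
        lintegral_lintegral_swap m1.aemeasurable
    _ = ∫⁻ r in Set.Ioi (0 : ℝ), ∫⁻ v : Fin n → ℝ,
          G (Fin.snoc v (r - ∑ j, v j) : Fin (n + 1) → ℝ) := by
        rw [← lintegral_indicator measurableSet_Ioi]
        refine lintegral_congr fun r => ?_
        by_cases hr : 0 < r
        · rw [Set.indicator_of_mem (by exact hr)]
        · rw [Set.indicator_of_notMem (by exact hr)]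
          rw [← lintegral_zero (μ := (volume : Measure (Fin n → ℝ)))]
          refine lintegral_congr fun v => ?_
          by_cases hv : ∃ j, v j ≤ 0
          · obtain ⟨j, hj⟩ := hv
            exact h0 _ (Fin.castSucc j) (by simpa using hj)
          · push Not at hv
            refine h0 _ (Fin.last n) ?_
            have : 0 ≤ ∑ j, v j := Finset.sum_nonneg fun j _ => (hv j).le
            simp only [Fin.snoc_last]
            linarith
    _ = ∫⁻ r in Set.Ioi (0 : ℝ), ∫⁻ u : Fin n → ℝ,
          ENNReal.ofReal (r ^ n) * G (r • auxFill n u) := by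
        refine setLIntegral_congr_fun measurableSet_Ioi fun r hr => ?_
        have hm : Measurable (fun v : Fin n → ℝ =>
            G (Fin.snoc v (r - ∑ j, v j) : Fin (n + 1) → ℝ)) :=
          m1.comp (f := fun v : Fin n → ℝ => (v, r)) (by fun_prop)
        have hm2 : Measurable (fun u : Fin n → ℝ => G (r • auxFill n u)) :=
          hG.comp ((aux_measurable_fill n).const_smul r)
        rw [aux_scale n r hr _ hm, lintegral_const_mul _ hm2]
        congr 1
        refine lintegral_congr fun u => ?_
        congr 1
        funext i
        refine Fin.lastCases ?_ (fun j => ?_) i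
        · simp [auxFill, mul_sub, Finset.mul_sum]
        · simp [auxFill]
    _ = _ := by
        refine lintegral_lintegral_swap (Measurable.aemeasurable ?_)
        have hf := aux_measurable_fill n
        refine Measurable.mul (by fun_prop) (hG.comp ?_)
        exact measurable_fst.smul (hf.comp measurable_snd)

/-- one-dimensional factor -/
noncomputable def auxg (τ a b : ℝ) : ℝ → ENNReal :=
  (Set.Ioi (0 : ℝ)).indicator
    fun r => ENNReal.ofReal (r ^ (-(τ * a + 1)) * Real.exp (-(b * r ^ (-τ))))

theorem auxg_measurable (τ a b : ℝ) : Measurable (auxg τ a b) := by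
  refine Measurable.indicator ?_ measurableSet_Ioi
  fun_prop

theorem auxg_nonpos (τ a b r : ℝ) (hr : r ≤ 0) : auxg τ a b r = 0 :=
  Set.indicator_of_notMem (by simpa using hr) _

theorem auxg_pos (τ a b r : ℝ) (hr : 0 < r) :
    auxg τ a b r = ENNReal.ofReal (r ^ (-(τ * a + 1)) * Real.exp (-(b * r ^ (-τ)))) :=
  Set.indicator_of_mem (by simpa using hr) _

theorem aux_inner (n : ℕ) (τ : ℝ) (hτ : 0 < τ) (α β x : Fin (n + 1) → ℝ)
    (hα : ∀ i, 0 < α i) (hβ : ∀ i, 0 < β i) (hx : ∀ i, 0 < x i) :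
    ∫⁻ r in Set.Ioi (0 : ℝ), ENNReal.ofReal (r ^ n) * ∏ i, auxg τ (α i) (β i) ((r • x) i)
      = ENNReal.ofReal (1 / τ * Real.Gamma (∑ i, α i)) *
        ENNReal.ofReal ((∑ j, β j / x j ^ τ) ^ (-(∑ i, α i)) * ∏ i, x i ^ (-(τ * α i + 1))) := by
  have hA : 0 < ∑ i, α i := Finset.sum_pos (fun i _ => hα i) ⟨0, Finset.mem_univ _⟩
  have hS : 0 < ∑ j, β j / x j ^ τ := Finset.sum_pos
    (fun i _ => div_pos (hβ i) (Real.rpow_pos_of_pos (hx i) _)) ⟨0, Finset.mem_univ _⟩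
  have hP : 0 < ∏ i, x i ^ (-(τ * α i + 1)) :=
    Finset.prod_pos fun i _ => Real.rpow_pos_of_pos (hx i) _
  have hΓ := Real.Gamma_pos_of_pos hA
  have key : ∀ r ∈ Set.Ioi (0 : ℝ),
      ENNReal.ofReal (r ^ n) * ∏ i, auxg τ (α i) (β i) ((r • x) i)
      = ENNReal.ofReal (∏ i, x i ^ (-(τ * α i + 1))) *
        ENNReal.ofReal (r ^ (-(τ * (∑ i, α i) + 1)) *
          Real.exp (-((∑ j, β j / x j ^ τ) * r ^ (-τ)))) := by
    intro r hr
    have hr : 0 < r := hr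
    have e1 : ∀ i, auxg τ (α i) (β i) ((r • x) i) = ENNReal.ofReal
        (x i ^ (-(τ * α i + 1)) * r ^ (-(τ * α i + 1)) *
          Real.exp (-(β i / x i ^ τ * r ^ (-τ)))) := by
      intro i
      have hxi := hx i
      rw [Pi.smul_apply, smul_eq_mul, auxg_pos _ _ _ _ (mul_pos hr hxi),
        Real.mul_rpow hr.le hxi.le, Real.mul_rpow hr.le hxi.le, Real.rpow_neg hxi.le τ]
      congr 2
      · ring
      · congr 1; ring
    simp only [e1]
    rw [← ENNReal.ofReal_prod_of_nonneg (fun i _ => by have := hx i; positivity),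
      ← ENNReal.ofReal_mul (by positivity), ← ENNReal.ofReal_mul hP.le]
    congr 1
    rw [Finset.prod_mul_distrib, Finset.prod_mul_distrib, ← Real.exp_sum,
      ← Real.rpow_sum_of_pos hr, Finset.sum_neg_distrib (fun i => β i / x i ^ τ * r ^ (-τ)),
      ← Finset.sum_mul]
    have : r ^ n * r ^ (∑ i, -(τ * α i + 1)) = r ^ (-(τ * (∑ i, α i) + 1)) := by
      rw [← Real.rpow_natCast, ← Real.rpow_add hr]
      congr 1
      simp [Finset.sum_add_distrib, ← Finset.mul_sum]
      ring
    rw [← this]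
    ring
  rw [setLIntegral_congr_fun measurableSet_Ioi key, lintegral_const_mul _ (by fun_prop),
    aux_gamma τ _ _ hτ hA hS, ← ENNReal.ofReal_mul hP.le, ← ENNReal.ofReal_mul (by positivity)]
  congr 1
  rw [Real.rpow_neg hS.le, one_div (∑ j, β j / x j ^ τ), Real.inv_rpow hS.le]
  ring

theorem aux_main (n : ℕ) (τ : ℝ) (hτ : 0 < τ) (α β : Fin (n + 1) → ℝ)
    (hα : ∀ i, 0 < α i) (hβ : ∀ i, 0 < β i) :
    Jint (n + 1) β τ α = (∏ i, ((1 / β i) ^ α i * Real.Gamma (α i))) /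
      (τ ^ n * Real.Gamma (∑ i, α i)) := by
  have hA : 0 < ∑ i, α i := Finset.sum_pos (fun i _ => hα i) ⟨0, Finset.mem_univ _⟩
  have hΓ := Real.Gamma_pos_of_pos hA
  set F : (Fin (n + 1) → ℝ) → ℝ := fun x =>
    (∑ j, β j / x j ^ τ) ^ (-(∑ i, α i)) * ∏ i, x i ^ (-(τ * α i + 1)) with hF
  have hFm : Measurable F := by fun_prop
  set T : Set (Fin n → ℝ) := {u | (∀ j, 0 ≤ u j) ∧ ∑ j, u j ≤ 1} with hT
  have hTm : MeasurableSet T := by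
    refine MeasurableSet.inter ?_ (measurableSet_le
      (f := fun u : Fin n → ℝ => ∑ j, u j) (by fun_prop) measurable_const)
    exact measurableSet_le (f := fun _ : Fin n → ℝ => (0 : Fin n → ℝ)) (g := fun u => u)
      measurable_const measurable_id
  have hfill : fillMap (n + 1) = auxFill n := funext (auxFill_eq n)
  have hTx : ∀ u, u ∈ T ↔ ∀ i, 0 ≤ auxFill n u i := by
    intro u
    rw [Fin.forall_fin_succ']
    simp [hT, auxFill]
  have hJ : Jint (n + 1) β τ α = ∫ u in T, F (auxFill n u) := by
    unfold Jint simplexMeasure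
    rw [hfill]
    exact integral_map (aux_measurable_fill n).aemeasurable hFm.aestronglyMeasurable
  have hL : ENNReal.ofReal (1 / τ * Real.Gamma (∑ i, α i)) *
      ∫⁻ u in T, ENNReal.ofReal (F (auxFill n u)) =
      ENNReal.ofReal (∏ i, (1 / τ * ((1 / β i) ^ α i * Real.Gamma (α i)))) := by
    rw [ENNReal.ofReal_prod_of_nonneg (fun i _ => by
      have := Real.Gamma_pos_of_pos (hα i); have := hβ i; positivity)]
    have e1 : ∀ i, ENNReal.ofReal (1 / τ * ((1 / β i) ^ α i * Real.Gamma (α i)))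
        = ∫⁻ t, auxg τ (α i) (β i) t := fun i => by
      rw [← aux_gamma τ _ _ hτ (hα i) (hβ i), ← lintegral_indicator measurableSet_Ioi]
      rfl
    simp only [e1]
    have hgm := fun i => auxg_measurable τ (α i) (β i)
    rw [← aux_prod _ _ hgm, aux_polar n (fun y => ∏ i, auxg τ (α i) (β i) (y i)) (by fun_prop)
      (fun y i hi => Finset.prod_eq_zero (Finset.mem_univ i) (auxg_nonpos _ _ _ _ hi)),
      ← lintegral_indicator hTm, ← lintegral_const_mul]
    · refine lintegral_congr fun u => ?_
      by_cases hu : ∀ i, 0 < auxFill n u i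
      · rw [Set.indicator_of_mem ((hTx u).2 fun i => (hu i).le),
          aux_inner n τ hτ α β _ hα hβ hu]
      · push Not at hu
        obtain ⟨i, hi⟩ := hu
        have hr : ∫⁻ r in Set.Ioi (0 : ℝ), ENNReal.ofReal (r ^ n) *
            ∏ i, auxg τ (α i) (β i) ((r • auxFill n u) i) = 0 := by
          rw [setLIntegral_congr_fun (g := fun _ => 0) measurableSet_Ioi, lintegral_zero]
          intro r (hr : 0 < r)
          simp only
          rw [Finset.prod_eq_zero (Finset.mem_univ i), mul_zero]
          refine auxg_nonpos _ _ _ _ ?_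
          rw [Pi.smul_apply, smul_eq_mul]
          exact mul_nonpos_of_nonneg_of_nonpos hr.le hi
        rw [hr]
        by_cases huT : u ∈ T
        · rw [Set.indicator_of_mem huT]
          have h0 : auxFill n u i = 0 := le_antisymm hi ((hTx u).1 huT i)
          have : F (auxFill n u) = 0 := by
            simp only [hF]
            rw [Finset.prod_eq_zero (Finset.mem_univ i), mul_zero]
            rw [h0, Real.zero_rpow]
            have := mul_pos hτ (hα i)
            linarith
          rw [this]; simp
        · rw [Set.indicator_of_notMem huT, mul_zero]
    · exact ((ENNReal.measurable_ofReal.comp (hFm.comp (aux_measurable_fill n)))).indicator hTm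
  rw [hJ, integral_eq_lintegral_of_nonneg_ae]
  · have hc : 0 < 1 / τ * Real.Gamma (∑ i, α i) := by positivity
    have h2 := congrArg ENNReal.toReal hL
    rw [ENNReal.toReal_mul, ENNReal.toReal_ofReal hc.le, ENNReal.toReal_ofReal
      (Finset.prod_nonneg fun i _ => by
        have := Real.Gamma_pos_of_pos (hα i); have := hβ i; positivity),
      Finset.prod_mul_distrib, Finset.prod_const, Finset.card_univ, Fintype.card_fin] at h2
    rw [eq_div_iff (by positivity)]
    have h3 : (1 / τ) ^ (n + 1) * τ ^ (n + 1) = 1 := by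
      rw [← mul_pow, one_div_mul_cancel hτ.ne', one_pow]
    generalize (∏ i, ((1 / β i) ^ α i * Real.Gamma (α i))) = P at *
    calc _ = (1 / τ * Real.Gamma (∑ i, α i) *
        (∫⁻ u in T, ENNReal.ofReal (F (auxFill n u))).toReal) * τ ^ (n + 1) := by
          rw [pow_succ]; field_simp
      _ = P * ((1 / τ) ^ (n + 1) * τ ^ (n + 1)) := by rw [h2]; ring
      _ = P := by rw [h3, mul_one]
  · rw [Filter.EventuallyLE, ae_restrict_iff' hTm]
    refine ae_of_all _ fun u hu => ?_
    have hx := (hTx u).1 hu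
    simp only [hF, Pi.zero_apply]
    refine mul_nonneg (Real.rpow_nonneg (Finset.sum_nonneg fun i _ => ?_) _)
      (Finset.prod_nonneg fun i _ => Real.rpow_nonneg (hx i) _)
    exact div_nonneg (hβ i).le (Real.rpow_nonneg (hx i) _)
  · exact (hFm.comp (aux_measurable_fill n)).aestronglyMeasurable

/-- `J(1 + e_m + e_n) = J_0 (1 + δ_mn)/(K(K+1) β_m β_n)` where
`J_0 = J(1) = 1/((K−1)! τ^{K−1} ∏_i β_i)`. -/
theorem J_at_one_plus_two_units
    (K : ℕ) (hK : 2 ≤ K) (τ : ℝ) (hτ : 0 < τ)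
    (β : Fin K → ℝ) (hβ : ∀ i, 0 < β i) (m n : Fin K) :
    Jint K β τ (fun i => 1 + kd i m + kd i n)
      = (1 / ((Nat.factorial (K - 1) : ℝ) * τ ^ (K - 1) * ∏ i, β i)) *
          (1 + kd m n) / ((K : ℝ) * ((K : ℝ) + 1) * β m * β n) := by
  obtain ⟨N, rfl⟩ : ∃ N, K = N + 1 := ⟨K - 1, by omega⟩
  have hkd : ∀ a b : Fin (N + 1), 0 ≤ kd a b := fun a b => by unfold kd; split_ifs <;> norm_num
  rw [aux_main N τ hτ _ β (fun i => by have := hkd i m; have := hkd i n; linarith) hβ]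
  have hsum : ∑ i : Fin (N + 1), (1 + kd i m + kd i n) = ((N + 2 : ℕ) : ℝ) + 1 := by
    simp [Finset.sum_add_distrib, kd]
    ring
  have hpow : ∀ i, (1 / β i) ^ (1 + kd i m + kd i n) * Real.Gamma (1 + kd i m + kd i n)
      = (β i)⁻¹ * (if i = m then (β i)⁻¹ else 1) * (if i = n then (β i)⁻¹ else 1) *
        (if i = m then (1 + kd m n) else 1) := by
    intro i
    have hb := hβ i
    by_cases h1 : i = m
    · by_cases h2 : i = n
      · subst h1; subst h2
        have hg : Real.Gamma (1 + 1 + 1) = 2 := by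
          have := Real.Gamma_nat_eq_factorial 2
          norm_num at this ⊢
        have hp : (1 / β i) ^ (1 + 1 + 1 : ℝ) = (1 / β i) ^ 3 := by
          rw [← Real.rpow_natCast]; norm_num
        simp only [kd, if_true, hg, hp]
        field_simp
        norm_num
      · subst h1
        have hg : Real.Gamma (1 + 1 + 0) = 1 := by norm_num
        have hp : (1 / β i) ^ (1 + 1 + 0 : ℝ) = (1 / β i) ^ 2 := by
          rw [← Real.rpow_natCast]; norm_num
        simp only [kd, if_true, h2, if_false, hg, hp]
        field_simp
        norm_num
    · by_cases h2 : i = n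
      · subst h2
        have hg : Real.Gamma (1 + 0 + 1) = 1 := by norm_num
        have hp : (1 / β i) ^ (1 + 0 + 1 : ℝ) = (1 / β i) ^ 2 := by
          rw [← Real.rpow_natCast]; norm_num
        simp only [kd, if_true, h1, if_false, hg, hp]
        field_simp
      · simp [kd, h1, h2]
  rw [hsum, Real.Gamma_nat_eq_factorial, Finset.prod_congr rfl fun i _ => hpow i]
  simp only [Finset.prod_mul_distrib, Finset.prod_ite_eq', Finset.mem_univ, if_true,
    Finset.prod_inv_distrib, Nat.add_sub_cancel, Nat.factorial_succ]
  have hm := hβ m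
  have hn := hβ n
  have hP : 0 < ∏ i, β i := Finset.prod_pos fun i _ => hβ i
  have hf : (0 : ℝ) < (Nat.factorial N : ℝ) := by exact_mod_cast Nat.factorial_pos N
  push_cast
  field_simp
end
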